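/- arXiv:2412.20001 — 4 statements merged into one kernel-verified Lean document; each statement's English description precedes it below -/
import Mathlib

section
/- For all n ≥ k ≥ 1, χ_b(KS(n,k)) ≥ n−k+1. -/
/-- A signed `k`-subset of `[n]`: a `k`-subset `A` of `{±1,…,±n}` with `A ∩ (−A) = ∅`. -/
def IsSignedKSubset (n k : ℕ) (A : Finset ℤ) : Prop :=
  A.card = k ∧ (∀ a ∈ A, a ≠ 0 ∧ a.natAbs ≤ n) ∧ ∀ a ∈ A, -a ∉ A

/-- A set of nonzero integers is alternating if any two of its elements that are consecutive
in absolute value have opposite signs. -/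
def IsAlternating (A : Finset ℤ) : Prop :=
  ∀ a ∈ A, ∀ b ∈ A, a.natAbs < b.natAbs →
    (∀ c ∈ A, ¬(a.natAbs < c.natAbs ∧ c.natAbs < b.natAbs)) → (0 < a ↔ b < 0)

/-- The element of smallest absolute value is positive. -/
def FirstPos (A : Finset ℤ) : Prop :=
  ∀ a ∈ A, (∀ b ∈ A, a.natAbs ≤ b.natAbs) → 0 < a

/-- Positive adjacency in the signed Kneser graph: `A ∩ (−B) = ∅`. -/
def ksPos (A B : Finset ℤ) : Prop := ∀ a ∈ A, -a ∉ B

/-- Negative adjacency in the signed Kneser graph: `A ∩ B = ∅`. -/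
def ksNeg (A B : Finset ℤ) : Prop := Disjoint A B

/-- The vertices of the signed Kneser graph `KS(n,k)`. -/
def KSVertex (n k : ℕ) : Type := {A : Finset ℤ // IsSignedKSubset n k A}

/-- A set `S` of vertices of a signed graph is balanced if some switching makes all edges
inside `S` positive. -/
def IsBalancedSet {V : Type*} (pos neg : V → V → Prop) (S : Set V) : Prop :=
  ∃ X : Set V, ∀ u ∈ S, ∀ v ∈ S,
    (pos u v → ((u ∈ X) ↔ (v ∈ X))) ∧ (neg u v → ¬((u ∈ X) ↔ (v ∈ X)))

/-- The balanced chromatic number: the least `p` such that the vertex set can be partitioned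
into `p` balanced sets. -/
noncomputable def balancedChromatic {V : Type*} (pos neg : V → V → Prop) : ℕ :=
  sInf {p : ℕ | ∃ f : V → Fin p, ∀ i : Fin p, IsBalancedSet pos neg (f ⁻¹' {i})}

/-!
A partition of a signed graph into `p` balanced sets amounts to a coloring by `±1, …, ±p` in which
the ends of a positive edge do not get opposite colors and the ends of a negative edge do not get
equal colors. Let such a coloring of `KS(n, k)` be given. A signed set `S` sees the colors of the
vertices contained in `S` and the opposites of those of the vertices contained in `-S`. By the edges
of `KS(n, k)` it never sees two opposite colors, so label it by the color of least absolute value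
that it sees, moved away from `0` by `k - 1`. Sets with fewer than `k` elements see nothing and get
their cardinality with a suitable sign. No two nested sets have opposite labels, so Tucker's lemma
for the boundary of the `n`-dimensional cross-polytope gives `n ≤ (k - 1) + p`.

Tucker's lemma follows from Ky Fan's: modulo 2, the number of maximal chains of signed sets whose
labels, by increasing absolute value, have signs `+, -, +, …` is odd. For arbitrary labels, the
numbers of `+, -, …` and of `-, +, …` patterns on a simplex add up to the number of `+, -, …`
patterns on its facets. Summed over the upper hemisphere, the interior facets cancel in pairs, so
the count on the sphere equals the count on the equator.
-/

open Finset
open scoped Pointwise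

section Alternation

variable {ι α : Type*} [LinearOrder α]

theorem prod_add_ordered_of_injective {R : Type*} [CommSemiring R] {κ : ι → α}
    (hκ : κ.Injective) (s : Finset ι) (f g : ι → R) :
    ∏ i ∈ s, (f i + g i) = ∏ i ∈ s, f i +
      ∑ i ∈ s, (g i * ∏ j ∈ s with κ j < κ i, (f j + g j)) * ∏ j ∈ s with κ i < κ j, f j :=
  @prod_add_ordered ι R _ (LinearOrder.lift' κ hκ) s f g

/-- The indicator in `ZMod 2` of the statement that, when `s` is listed in increasing order of `κ`,
the values of `g` are `1, 0, 1, 0, …`. It is a product over `i ∈ s` in which the cardinality is the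
position of `i` in this list. -/
def alternationIndicator (κ : ι → α) (g : ι → ZMod 2) (s : Finset ι) : ZMod 2 :=
  ∏ i ∈ s, (g i + #{j ∈ s | κ j < κ i})

theorem alternationIndicator_erase [DecidableEq ι] {κ : ι → α} (hκ : κ.Injective) (g : ι → ZMod 2)
    {s : Finset ι} {i : ι} (hi : i ∈ s) :
    alternationIndicator κ g (s.erase i) =
      (∏ j ∈ s with κ j < κ i, (g j + #{t ∈ s | κ t < κ j})) *
        ∏ j ∈ s with κ i < κ j, (g j + #{t ∈ s | κ t < κ j} + 1) := by
  have herase : s.erase i = {j ∈ s | κ j < κ i} ∪ {j ∈ s | κ i < κ j} := by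
    ext j
    simp only [mem_erase, mem_union, mem_filter, ← and_or_left, ← ne_iff_lt_or_gt, hκ.ne_iff]
    exact and_comm
  have hdisj : Disjoint {j ∈ s | κ j < κ i} {j ∈ s | κ i < κ j} :=
    disjoint_filter.2 fun _ _ => lt_asymm
  rw [alternationIndicator]
  simp only [filter_erase]
  rw [herase, prod_union hdisj]
  congr 1 <;> refine prod_congr rfl fun j hj => ?_ <;> obtain ⟨-, hj⟩ := mem_filter.1 hj
  · rw [erase_eq_of_notMem (by simp [hj.le])]
  · rw [← card_erase_add_one (s := {t ∈ s | κ t < κ j}) (by simp [hi, hj] : i ∈ _), Nat.cast_succ,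
      add_assoc, add_assoc, CharTwo.add_self_eq_zero, add_zero]

/- Write `r j` for the position of `j`. Expanding `∏ ((g j + r j + 1) + 1)` according to the largest
factor from which the second summand is chosen produces the facets of `s` one by one. -/
theorem sum_alternationIndicator_erase [DecidableEq ι] {κ : ι → α} (hκ : κ.Injective)
    (g : ι → ZMod 2) (s : Finset ι) :
    ∑ i ∈ s, alternationIndicator κ g (s.erase i) =
      alternationIndicator κ g s + alternationIndicator κ (g + 1) s := by
  rw [sum_congr rfl fun i hi => alternationIndicator_erase hκ g hi, ← CharTwo.sub_eq_add,
    eq_sub_iff_add_eq']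
  calc
    alternationIndicator κ (g + 1) s + ∑ i ∈ s, (∏ j ∈ s with κ j < κ i,
        (g j + #{t ∈ s | κ t < κ j})) * ∏ j ∈ s with κ i < κ j, (g j + #{t ∈ s | κ t < κ j} + 1)
      = ∏ j ∈ s, (g j + #{t ∈ s | κ t < κ j} + 1 + 1) := by
        rw [prod_add_ordered_of_injective hκ]
        simp only [alternationIndicator, Pi.add_apply, Pi.one_apply, one_mul, add_assoc,
          CharTwo.add_self_eq_zero, add_zero, add_comm (1 : ZMod 2)]
    _ = alternationIndicator κ g s := by
        simp only [alternationIndicator, add_assoc, CharTwo.add_self_eq_zero, add_zero]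

theorem ne_of_alternationIndicator_ne_zero {κ : ι → α} (hκ : κ.Injective) {g : ι → ZMod 2}
    {s : Finset ι} (hs : alternationIndicator κ g s ≠ 0) {i j : ι} (hi : i ∈ s) (hj : j ∈ s)
    (hij : κ i < κ j) (hmin : ∀ t ∈ s, κ i < κ t → κ j ≤ κ t) : g i ≠ g j := by
  classical
  intro hg
  have hfactor := prod_ne_zero_iff.1 hs
  have hrank : {t ∈ s | κ t < κ j} = insert i {t ∈ s | κ t < κ i} := by
    ext t
    simp only [mem_filter, mem_insert]
    constructor
    · rintro ⟨ht, htj⟩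
      rcases lt_trichotomy (κ t) (κ i) with h | h | h
      · exact .inr ⟨ht, h⟩
      · exact .inl (hκ h)
      · exact absurd htj (hmin t ht h).not_gt
    · rintro (rfl | ⟨ht, hti⟩)
      exacts [⟨hi, hij⟩, ⟨ht, hti.trans hij⟩]
  have hnext := hfactor j hj
  rw [hrank, card_insert_of_notMem (by simp), ← hg, Nat.cast_succ, ← add_assoc] at hnext
  have hparity : ∀ z : ZMod 2, z ≠ 0 → z + 1 = 0 := by decide
  exact hnext (hparity _ (hfactor i hi))

end Alternation

section LabelAlternation

variable {ι ι' : Type*} [LinearOrder ι] [LinearOrder ι']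

/-- The key that orders indices by the absolute value of their label. Ties are broken by the index,
so that arbitrary families of labels can be ordered. -/
def labelKey (l : ι → ℤ) (i : ι) : ℕ ×ₗ ι := toLex ((l i).natAbs, i)

/-- The sign of a nonzero integer as an element of `ZMod 2`, with `1` for positive integers. -/
def signBit (a : ℤ) : ZMod 2 := if 0 < a then 1 else 0

/-- The indicator in `ZMod 2` of the statement that the labels `l i`, `i ∈ s`, listed by increasing
absolute value, have signs `+, -, +, -, …`. -/
def posAlternation (l : ι → ℤ) (s : Finset ι) : ZMod 2 :=
  alternationIndicator (labelKey l) (signBit ∘ l) s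

omit [LinearOrder ι] in
theorem labelKey_injective (l : ι → ℤ) : (labelKey l).Injective :=
  fun _ _ h => (Prod.mk.inj (toLex.injective h)).2

theorem natAbs_le_of_labelKey_le {l : ι → ℤ} {i j : ι} (h : labelKey l i ≤ labelKey l j) :
    (l i).natAbs ≤ (l j).natAbs :=
  (Prod.Lex.toLex_le_toLex.1 h).elim le_of_lt fun h => h.1.le

theorem signBit_neg {a : ℤ} (ha : a ≠ 0) : signBit (-a) = signBit a + 1 := by
  rcases ha.lt_or_gt with h | h
  · simp [signBit, h, h.le]
  · simp [signBit, h, h.le, CharTwo.add_self_eq_zero]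

theorem posAlternation_congr {l l' : ι → ℤ} {s : Finset ι} (h : ∀ i ∈ s, l i = l' i) :
    posAlternation l s = posAlternation l' s := by
  refine prod_congr rfl fun i hi => ?_
  have hfilter : {j ∈ s | labelKey l j < labelKey l i} =
      {j ∈ s | labelKey l' j < labelKey l' i} :=
    filter_congr fun j hj => by simp only [labelKey, h i hi, h j hj]
  rw [hfilter, Function.comp_apply, Function.comp_apply, h i hi]

theorem posAlternation_map (e : ι ↪o ι') (l : ι' → ℤ) (s : Finset ι) :
    posAlternation l (s.map e.toEmbedding) = posAlternation (l ∘ e) s := by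
  simp [posAlternation, alternationIndicator, prod_map, filter_map, labelKey,
    Prod.Lex.toLex_lt_toLex, Function.comp_def]

theorem posAlternation_neg {l : ι → ℤ} (hl : ∀ i, l i ≠ 0) (s : Finset ι) :
    posAlternation (-l) s = alternationIndicator (labelKey l) (signBit ∘ l + 1) s := by
  have hkey : labelKey (-l) = labelKey l := by
    funext i
    simp [labelKey]
  have hsign : signBit ∘ (-l) = signBit ∘ l + 1 := funext fun i => signBit_neg (hl i)
  rw [posAlternation, hkey, hsign]

theorem posAlternation_add_neg {l : ι → ℤ} (hl : ∀ i, l i ≠ 0) (s : Finset ι) :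
    posAlternation l s + posAlternation (-l) s = ∑ i ∈ s, posAlternation l (s.erase i) := by
  rw [posAlternation_neg hl]
  exact (sum_alternationIndicator_erase (labelKey_injective l) (signBit ∘ l) s).symm

theorem injOn_natAbs_of_posAlternation_ne_zero {l : ι → ℤ} {s : Finset ι}
    (hs : posAlternation l s ≠ 0) (hl : ∀ i ∈ s, ∀ j ∈ s, l i ≠ -l j) :
    Set.InjOn (fun i => (l i).natAbs) s := by
  have hlt : ∀ i ∈ s, ∀ j ∈ s, labelKey l i < labelKey l j → (l i).natAbs ≠ (l j).natAbs := by
    intro i hi j hj hij habs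
    obtain ⟨t, ht, htmin⟩ := exists_min_image {t ∈ s | labelKey l i < labelKey l t} (labelKey l)
      ⟨j, mem_filter.2 ⟨hj, hij⟩⟩
    simp only [mem_filter, and_imp] at ht htmin
    have habs_t : (l i).natAbs = (l t).natAbs :=
      (natAbs_le_of_labelKey_le ht.2.le).antisymm
        (habs ▸ natAbs_le_of_labelKey_le (htmin j hj hij))
    have hlabel : l i = l t :=
      (Int.natAbs_eq_natAbs_iff.1 habs_t).resolve_right (hl i hi t ht.1)
    exact ne_of_alternationIndicator_ne_zero (labelKey_injective l) hs hi ht.1 ht.2 htmin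
      (congrArg signBit hlabel)
  intro i hi j hj habs
  rcases lt_trichotomy (labelKey l i) (labelKey l j) with h | h | h
  · exact absurd habs (hlt i hi j hj h)
  · exact labelKey_injective l h
  · exact absurd habs.symm (hlt j hj i hi h)

end LabelAlternation

section SignedFlags

variable {n : ℕ}

/-- A nonempty signed subset of `[n]`. These are the faces of the boundary of the `n`-dimensional
cross-polytope. -/
def IsSignedSet (n : ℕ) (S : Finset ℤ) : Prop := S.Nonempty ∧ IsSignedKSubset n #S S

theorem IsSignedSet.mono {m : ℕ} (hnm : n ≤ m) {S : Finset ℤ} (hS : IsSignedSet n S) :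
    IsSignedSet m S :=
  ⟨hS.1, rfl, fun a ha => ⟨(hS.2.2.1 a ha).1, (hS.2.2.1 a ha).2.trans hnm⟩, hS.2.2.2⟩

theorem IsSignedSet.neg {S : Finset ℤ} (hS : IsSignedSet n S) : IsSignedSet n (-S) := by
  refine ⟨hS.1.neg, rfl, fun a ha => ?_, fun a ha => ?_⟩
  · simpa using hS.2.2.1 (-a) (mem_neg'.1 ha)
  · rw [mem_neg']
    exact hS.2.2.2 (-a) (mem_neg'.1 ha)

/-- A signed permutation of `[n]` as the sequence of its values. Through `signedFlag` these encode
the maximal simplices of the barycentric subdivision of the boundary of the cross-polytope. -/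
structure IsSignedPerm (v : Fin n → ℤ) : Prop where
  ne_zero : ∀ i, v i ≠ 0
  natAbs_le : ∀ i, (v i).natAbs ≤ n
  injective_natAbs : Function.Injective fun i => (v i).natAbs

/-- The `i`-th member, counted from `0`, of the chain of signed sets obtained by inserting the
entries of `v` one after the other. -/
def signedFlag (v : Fin n → ℤ) (i : Fin n) : Finset ℤ := (Iic i).image v

theorem signedFlag_mono (v : Fin n → ℤ) : Monotone (signedFlag v) :=
  fun _ _ h => image_subset_image (Iic_subset_Iic.2 h)

theorem signedFlag_neg (v : Fin n → ℤ) (i : Fin n) : signedFlag (-v) i = -signedFlag v i := by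
  rw [← image_neg_eq_neg, signedFlag, signedFlag, image_image]
  rfl

theorem signedFlag_update_of_lt (v : Fin n → ℤ) {i j : Fin n} (hij : i < j) (a : ℤ) :
    signedFlag (Function.update v j a) i = signedFlag v i :=
  image_congr fun _ ht => Function.update_of_ne (lt_of_le_of_lt (mem_Iic.1 ht) hij).ne _ _

theorem signedFlag_comp_swap (v : Fin (n + 1) → ℤ) (i : Fin n) {j : Fin (n + 1)}
    (hj : j ≠ i.castSucc) :
    signedFlag (v ∘ Equiv.swap i.castSucc i.succ) j = signedFlag v j := by
  have hIic : (Iic j).map (Equiv.swap i.castSucc i.succ).toEmbedding = Iic j := by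
    have hle : ∀ t, Equiv.swap i.castSucc i.succ t ≤ j ↔ t ≤ j := by
      intro t
      rw [Equiv.swap_apply_def]
      simp only [Fin.le_def, Fin.ext_iff, ne_eq] at *
      split_ifs <;> grind
    ext t
    rw [mem_map_equiv, Equiv.symm_swap, mem_Iic, mem_Iic, hle]
  nth_rw 2 [signedFlag]
  rw [← hIic, map_eq_image, image_image]
  rfl

theorem signedFlag_init (v : Fin (n + 1) → ℤ) (i : Fin n) :
    signedFlag (Fin.init v) i = signedFlag v i.castSucc := by
  rw [signedFlag, signedFlag, ← Fin.finsetImage_castSucc_Iic, image_image]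
  rfl

namespace IsSignedPerm

theorem of_natAbs_eq {v w : Fin n → ℤ} (hv : IsSignedPerm v)
    (h : ∀ i, (w i).natAbs = (v i).natAbs) : IsSignedPerm w where
  ne_zero i := by rw [← Int.natAbs_ne_zero, h, Int.natAbs_ne_zero]; exact hv.ne_zero i
  natAbs_le i := by rw [h]; exact hv.natAbs_le i
  injective_natAbs := by simpa only [h] using hv.injective_natAbs

theorem neg {v : Fin n → ℤ} (hv : IsSignedPerm v) : IsSignedPerm (-v) :=
  hv.of_natAbs_eq fun i => Int.natAbs_neg (v i)

theorem comp_perm {v : Fin n → ℤ} (hv : IsSignedPerm v) (σ : Equiv.Perm (Fin n)) :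
    IsSignedPerm (v ∘ σ) :=
  ⟨fun i => hv.ne_zero (σ i), fun i => hv.natAbs_le (σ i), hv.injective_natAbs.comp σ.injective⟩

theorem update_neg {v : Fin n → ℤ} (hv : IsSignedPerm v) (i : Fin n) :
    IsSignedPerm (Function.update v i (-v i)) := by
  refine hv.of_natAbs_eq fun j => ?_
  rcases eq_or_ne j i with rfl | hj
  · rw [Function.update_self, Int.natAbs_neg]
  · rw [Function.update_of_ne hj]

theorem exists_natAbs_eq {v : Fin n → ℤ} (hv : IsSignedPerm v) {a : ℕ} (ha : a ∈ Icc 1 n) :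
    ∃ i, (v i).natAbs = a := by
  have hsurj : Set.SurjOn (fun i => (v i).natAbs) (univ : Finset (Fin n)) (Icc 1 n) := by
    refine surjOn_of_injOn_of_card_le _ ?_ hv.injective_natAbs.injOn (by simp)
    exact fun i _ => mem_Icc.2 ⟨Int.natAbs_pos.2 (hv.ne_zero i), hv.natAbs_le i⟩
  obtain ⟨i, -, hi⟩ := hsurj ha
  exact ⟨i, hi⟩

theorem ne_neg {v : Fin n → ℤ} (hv : IsSignedPerm v) (i j : Fin n) : v i ≠ -v j := by
  intro h
  obtain rfl : i = j := hv.injective_natAbs (by simp [h])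
  exact hv.ne_zero i (self_eq_neg.1 h)

theorem init {v : Fin (n + 1) → ℤ} (hv : IsSignedPerm v) (hlast : v (Fin.last n) = n + 1) :
    IsSignedPerm (Fin.init v) := by
  refine ⟨fun i => hv.ne_zero i.castSucc, fun i => ?_,
    hv.injective_natAbs.comp (Fin.castSucc_injective n)⟩
  have hle := hv.natAbs_le i.castSucc
  have hne := hv.injective_natAbs.ne (Fin.castSucc_lt_last i).ne
  simp only [hlast] at hne
  change (v i.castSucc).natAbs ≤ n
  omega

theorem snoc {v : Fin n → ℤ} (hv : IsSignedPerm v) :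
    IsSignedPerm (Fin.snoc v (n + 1 : ℤ) : Fin (n + 1) → ℤ) := by
  refine ⟨fun i => ?_, fun i => ?_, ?_⟩
  · cases i using Fin.lastCases with
    | last => simp only [Fin.snoc_last]; omega
    | cast i => simpa only [Fin.snoc_castSucc] using hv.ne_zero i
  · cases i using Fin.lastCases with
    | last => simp only [Fin.snoc_last]; omega
    | cast i => simpa only [Fin.snoc_castSucc] using (hv.natAbs_le i).trans n.le_succ
  · have habs := Fin.comp_snoc Int.natAbs v (n + 1 : ℤ)
    change Function.Injective (Int.natAbs ∘ (Fin.snoc v (n + 1 : ℤ) : Fin (n + 1) → ℤ))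
    rw [habs, Fin.snoc_injective_iff]
    refine ⟨hv.injective_natAbs, ?_⟩
    rintro ⟨i, hi⟩
    have := hv.natAbs_le i
    rw [Function.comp_apply] at hi
    omega

theorem isSignedSet_signedFlag {v : Fin n → ℤ} (hv : IsSignedPerm v) (i : Fin n) :
    IsSignedSet n (signedFlag v i) := by
  refine ⟨(nonempty_Iic).image v, rfl, ?_, ?_⟩
  · simp only [signedFlag, forall_mem_image]
    exact fun j _ => ⟨hv.ne_zero j, hv.natAbs_le j⟩
  · simp only [signedFlag, forall_mem_image]
    exact fun j _ => by simpa using fun t _ => hv.ne_neg t j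

end IsSignedPerm

theorem finite_setOf_isSignedPerm (n : ℕ) : {v : Fin n → ℤ | IsSignedPerm v}.Finite := by
  refine (Set.finite_Icc (fun _ => -n : Fin n → ℤ) fun _ => n).subset fun v hv => ?_
  have habs (i : Fin n) : |v i| ≤ n := by
    rw [Int.abs_eq_natAbs]
    exact_mod_cast hv.natAbs_le i
  exact ⟨fun i => (abs_le.1 (habs i)).1, fun i => (abs_le.1 (habs i)).2⟩

/-- The finset of all signed permutations of `[n]`. -/
noncomputable def signedPerms (n : ℕ) : Finset (Fin n → ℤ) :=
  (finite_setOf_isSignedPerm n).toFinset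

theorem mem_signedPerms {v : Fin n → ℤ} : v ∈ signedPerms n ↔ IsSignedPerm v :=
  (finite_setOf_isSignedPerm n).mem_toFinset

end SignedFlags

section KyFan

variable {n : ℕ}

/-- Odd labelings of the faces of the boundary of the `n`-dimensional cross-polytope by nonzero
integers. -/
structure IsAntipodalLabeling (n : ℕ) (lam : Finset ℤ → ℤ) : Prop where
  ne_zero : ∀ S, IsSignedSet n S → lam S ≠ 0
  map_neg : ∀ S, IsSignedSet n S → lam (-S) = -lam S

theorem IsAntipodalLabeling.mono {m : ℕ} (hnm : n ≤ m) {lam : Finset ℤ → ℤ}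
    (hlam : IsAntipodalLabeling m lam) : IsAntipodalLabeling n lam :=
  ⟨fun S hS => hlam.ne_zero S (hS.mono hnm), fun S hS => hlam.map_neg S (hS.mono hnm)⟩

/-- The labels along the chain of signed sets given by `v`. -/
def flagLabels (lam : Finset ℤ → ℤ) (v : Fin n → ℤ) (i : Fin n) : ℤ := lam (signedFlag v i)

theorem flagLabels_neg {lam : Finset ℤ → ℤ} (hlam : IsAntipodalLabeling n lam) {v : Fin n → ℤ}
    (hv : IsSignedPerm v) : flagLabels lam (-v) = -flagLabels lam v := by
  funext i
  rw [flagLabels, signedFlag_neg, hlam.map_neg _ (hv.isSignedSet_signedFlag i)]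
  rfl

/-- The signed permutations of `[n + 1]` in which `n + 1` occurs with positive sign. They encode the
maximal simplices of the upper hemisphere. -/
noncomputable def upperSignedPerms (n : ℕ) : Finset (Fin (n + 1) → ℤ) :=
  {v ∈ signedPerms (n + 1) | ∃ i, v i = n + 1}

theorem mem_upperSignedPerms {v : Fin (n + 1) → ℤ} :
    v ∈ upperSignedPerms n ↔ IsSignedPerm v ∧ ∃ i, v i = n + 1 := by
  rw [upperSignedPerms, mem_filter, mem_signedPerms]

theorem IsSignedPerm.exists_neg_eq_iff {v : Fin (n + 1) → ℤ} (hv : IsSignedPerm v) :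
    (∃ i, (-v) i = n + 1) ↔ ¬∃ i, v i = n + 1 := by
  constructor
  · rintro ⟨i, hi⟩ ⟨j, hj⟩
    exact hv.ne_neg j i (hj.trans hi.symm)
  · intro h
    obtain ⟨i, hi⟩ := hv.exists_natAbs_eq (mem_Icc.2 ⟨n.succ_pos, le_rfl⟩)
    refine ⟨i, ?_⟩
    have := not_exists.1 h i
    rw [Pi.neg_apply]
    omega

theorem sum_signedPerms_eq_sum_upper {M : Type*} [AddCommMonoid M] (F : (Fin (n + 1) → ℤ) → M) :
    ∑ v ∈ signedPerms (n + 1), F v = ∑ v ∈ upperSignedPerms n, (F v + F (-v)) := by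
  rw [sum_add_distrib, ← sum_filter_add_sum_filter_not (signedPerms (n + 1)) (∃ i, · i = n + 1)]
  congr 1
  refine sum_nbij' (- ·) (- ·) ?_ ?_ (fun v _ => neg_neg v) (fun v _ => neg_neg v)
    fun v _ => by rw [neg_neg]
  · intro v hv
    rw [mem_filter, mem_signedPerms] at hv
    exact mem_upperSignedPerms.2 ⟨hv.1.neg, hv.1.exists_neg_eq_iff.2 hv.2⟩
  · intro v hv
    rw [mem_upperSignedPerms] at hv
    rw [mem_filter, mem_signedPerms, hv.1.neg.exists_neg_eq_iff.symm, neg_neg]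
    exact ⟨hv.1.neg, hv.2⟩

/- Omitting an inner member of the chain leaves a ridge that lies in exactly two maximal chains. -/
theorem sum_posAlternation_erase_castSucc (lam : Finset ℤ → ℤ) (i : Fin n) :
    ∑ v ∈ upperSignedPerms n, posAlternation (flagLabels lam v) (univ.erase i.castSucc) = 0 := by
  refine sum_involution (fun v _ => v ∘ Equiv.swap i.castSucc i.succ) ?_ ?_ ?_ ?_
  · intro v _
    rw [CharTwo.add_eq_zero]
    refine posAlternation_congr fun j hj => ?_
    rw [flagLabels, flagLabels, signedFlag_comp_swap v i (ne_of_mem_erase hj)]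
  · intro v hv _ hfix
    have hval : v i.succ = v i.castSucc := by simpa using congrFun hfix i.castSucc
    have hidx := (mem_upperSignedPerms.1 hv).1.injective_natAbs (congrArg Int.natAbs hval)
    exact (Fin.castSucc_lt_succ (i := i)).ne' hidx
  · intro v hv
    obtain ⟨hperm, j, hj⟩ := mem_upperSignedPerms.1 hv
    exact mem_upperSignedPerms.2
      ⟨hperm.comp_perm _, Equiv.swap i.castSucc i.succ j, by simpa using hj⟩
  · intro v _
    ext j
    simp

/- Omitting the last member leaves a ridge whose second maximal chain is obtained by changing the
last sign. This chain is in the same hemisphere unless the ridge lies on the equator. -/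
theorem sum_posAlternation_erase_last (lam : Finset ℤ → ℤ) :
    ∑ v ∈ upperSignedPerms n, posAlternation (flagLabels lam v) (univ.erase (Fin.last n)) =
      ∑ v ∈ upperSignedPerms n with v (Fin.last n) = (n : ℤ) + 1,
        posAlternation (flagLabels lam v) (univ.erase (Fin.last n)) := by
  rw [← sum_filter_add_sum_filter_not _ fun v => v (Fin.last n) = (n : ℤ) + 1, add_eq_left]
  refine sum_involution (fun v _ => Function.update v (Fin.last n) (-v (Fin.last n))) ?_ ?_ ?_ ?_
  · intro v _
    rw [CharTwo.add_eq_zero]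
    refine posAlternation_congr fun j hj => ?_
    rw [flagLabels, flagLabels,
      signedFlag_update_of_lt v (Fin.lt_last_iff_ne_last.2 (ne_of_mem_erase hj))]
  · intro v hv _ hfix
    have hperm := (mem_upperSignedPerms.1 (mem_filter.1 hv).1).1
    have hval : -v (Fin.last n) = v (Fin.last n) := by simpa using congrFun hfix (Fin.last n)
    exact hperm.ne_neg _ _ hval.symm
  · intro v hv
    obtain ⟨hupper, hlast⟩ := mem_filter.1 hv
    obtain ⟨hperm, j, hj⟩ := mem_upperSignedPerms.1 hupper
    have hj_last : j ≠ Fin.last n := by rintro rfl; exact hlast hj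
    refine mem_filter.2 ⟨mem_upperSignedPerms.2 ⟨hperm.update_neg _, j, ?_⟩, ?_⟩
    · rw [Function.update_of_ne hj_last, hj]
    · rw [Function.update_self]
      exact fun h => hperm.ne_neg j (Fin.last n) (hj.trans h.symm)
  · intro v _
    simp

theorem posAlternation_flagLabels_erase_last (lam : Finset ℤ → ℤ) (v : Fin (n + 1) → ℤ) :
    posAlternation (flagLabels lam v) (univ.erase (Fin.last n)) =
      posAlternation (flagLabels lam (Fin.init v)) univ := by
  have hmap : univ.erase (Fin.last n) = univ.map Fin.castSuccOrderEmb.toEmbedding := by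
    rw [Fin.univ_castSuccEmb, erase_cons]
    rfl
  rw [hmap, posAlternation_map]
  congr 1
  funext i
  rw [flagLabels, signedFlag_init]
  rfl

theorem sum_upperSignedPerms_init {M : Type*} [AddCommMonoid M] (F : (Fin n → ℤ) → M) :
    ∑ v ∈ upperSignedPerms n with v (Fin.last n) = (n : ℤ) + 1, F (Fin.init v) =
      ∑ v ∈ signedPerms n, F v := by
  refine sum_nbij' Fin.init (fun v => Fin.snoc v (n + 1 : ℤ)) ?_ ?_ ?_ ?_ fun v _ => rfl
  · intro v hv
    rw [mem_filter, mem_upperSignedPerms] at hv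
    exact mem_signedPerms.2 (hv.1.1.init hv.2)
  · intro v hv
    rw [mem_filter, mem_upperSignedPerms]
    exact ⟨⟨(mem_signedPerms.1 hv).snoc, Fin.last n, Fin.snoc_last ..⟩, Fin.snoc_last ..⟩
  · intro v hv
    have hsnoc := Fin.snoc_init_self v
    rwa [(mem_filter.1 hv).2] at hsnoc
  · intro v _
    exact Fin.init_snoc ..

theorem sum_posAlternation_succ {lam : Finset ℤ → ℤ} (hlam : IsAntipodalLabeling (n + 1) lam) :
    ∑ v ∈ signedPerms (n + 1), posAlternation (flagLabels lam v) univ =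
      ∑ v ∈ signedPerms n, posAlternation (flagLabels lam v) univ := by
  have hfacets : ∀ v ∈ upperSignedPerms n,
      posAlternation (flagLabels lam v) univ + posAlternation (flagLabels lam (-v)) univ =
        ∑ i, posAlternation (flagLabels lam v) (univ.erase i) := by
    intro v hv
    have hperm := (mem_upperSignedPerms.1 hv).1
    rw [flagLabels_neg hlam hperm]
    exact posAlternation_add_neg
      (fun i => hlam.ne_zero _ (hperm.isSignedSet_signedFlag i)) univ
  rw [sum_signedPerms_eq_sum_upper, sum_congr rfl hfacets, sum_comm, Fin.sum_univ_castSucc,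
    sum_eq_zero fun i _ => sum_posAlternation_erase_castSucc lam i, zero_add,
    sum_posAlternation_erase_last]
  simp only [posAlternation_flagLabels_erase_last]
  exact sum_upperSignedPerms_init fun v => posAlternation (flagLabels lam v) univ

theorem ky_fan_sum_posAlternation : ∀ {n : ℕ} {lam : Finset ℤ → ℤ}, IsAntipodalLabeling n lam →
    ∑ v ∈ signedPerms n, posAlternation (flagLabels lam v) univ = 1
  | 0, lam, _ => by
    have hempty : signedPerms 0 = {Fin.elim0} :=
      eq_singleton_iff_unique_mem.2 ⟨mem_signedPerms.2
        ⟨fun i => i.elim0, fun i => i.elim0, fun i => i.elim0⟩, fun v _ => Subsingleton.elim v _⟩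
    rw [hempty, sum_singleton]
    rfl
  | n + 1, lam, hlam => by
    rw [sum_posAlternation_succ hlam, ky_fan_sum_posAlternation (hlam.mono n.le_succ)]

theorem octahedral_tucker {m : ℕ} {lam : Finset ℤ → ℤ} (hlam : IsAntipodalLabeling n lam)
    (hbound : ∀ S, IsSignedSet n S → (lam S).natAbs ≤ m)
    (hcompl : ∀ S T, IsSignedSet n S → IsSignedSet n T → S ⊆ T → lam S ≠ -lam T) : n ≤ m := by
  obtain ⟨v, hv, hne⟩ := exists_ne_zero_of_sum_ne_zero
    ((ky_fan_sum_posAlternation hlam).trans_ne one_ne_zero)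
  have hflag := (mem_signedPerms.1 hv).isSignedSet_signedFlag
  have hlabels : ∀ i j, flagLabels lam v i ≠ -flagLabels lam v j := by
    intro i j h
    rcases le_total i j with hij | hji
    · exact hcompl _ _ (hflag i) (hflag j) (signedFlag_mono v hij) h
    · exact hcompl _ _ (hflag j) (hflag i) (signedFlag_mono v hji) (neg_eq_iff_eq_neg.1 h.symm)
  have hinj := injOn_natAbs_of_posAlternation_ne_zero hne fun i _ j _ => hlabels i j
  have hmaps : ∀ i ∈ univ, (flagLabels lam v i).natAbs ∈ Icc 1 m := fun i _ =>
    mem_Icc.2 ⟨Int.natAbs_pos.2 (hlam.ne_zero _ (hflag i)), hbound _ (hflag i)⟩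
  simpa using card_le_card_of_injOn _ hmaps hinj

end KyFan

section SignedColoring

variable {V : Type*} {pos neg : V → V → Prop}

/-- A proper coloring, in the sense of Zaslavsky, of the negative of a signed graph by the nonzero
colors `±1, …, ±p`: two vertices get different colors if they are joined by a negative edge, and
non-opposite colors if they are joined by a positive edge. The absolute value of a color is a class
of a partition into balanced sets, and its sign records the switching of this class. -/
structure IsSignedColoring (pos neg : V → V → Prop) (p : ℕ) (c : V → ℤ) : Prop where
  ne_zero : ∀ v, c v ≠ 0
  natAbs_le : ∀ v, (c v).natAbs ≤ p
  ne_neg_of_pos : ∀ u v, pos u v → c u ≠ -c v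
  ne_of_neg : ∀ u v, neg u v → c u ≠ c v

theorem exists_isSignedColoring {p : ℕ} {f : V → Fin p}
    (hf : ∀ i, IsBalancedSet pos neg (f ⁻¹' {i})) : ∃ c, IsSignedColoring pos neg p c := by
  classical
  choose X hX using hf
  have hclass : ∀ {u v}, f u = f v →
      (pos u v → (u ∈ X (f u) ↔ v ∈ X (f v))) ∧ (neg u v → ¬(u ∈ X (f u) ↔ v ∈ X (f v))) := by
    intro u v h
    have huv := hX (f u) u rfl v h.symm
    rwa [← h]
  let c (v : V) : ℤ := if v ∈ X (f v) then (f v : ℤ) + 1 else -((f v : ℤ) + 1)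
  have hc : ∀ v, (c v).natAbs = f v + 1 := fun v => by
    dsimp only [c]
    split_ifs <;> omega
  have hc_pos : ∀ v, 0 < c v ↔ v ∈ X (f v) := fun v => by
    dsimp only [c]
    split_ifs with h <;> simp only [h, iff_true, iff_false] <;> omega
  have hf_eq : ∀ {u v}, (c u).natAbs = (c v).natAbs → f u = f v := fun {u v} h =>
    Fin.ext (Nat.succ_injective ((hc u).symm.trans (h.trans (hc v))))
  refine ⟨c, fun v => ?_, fun v => hc v ▸ (f v).isLt, fun u v huv h => ?_, fun u v huv h => ?_⟩
  · rw [← Int.natAbs_ne_zero, hc]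
    exact Nat.succ_ne_zero _
  · have hsign := (hclass (hf_eq (by rw [h, Int.natAbs_neg]))).1 huv
    rw [← hc_pos, ← hc_pos] at hsign
    have := hc v
    omega
  · have hsign := (hclass (hf_eq (congrArg _ h))).2 huv
    rw [← hc_pos, ← hc_pos, h] at hsign
    exact hsign Iff.rfl

theorem exists_partition_isBalancedSet [Finite V] (hloop : ∀ v, ¬neg v v) :
    ∃ p, ∃ f : V → Fin p, ∀ i, IsBalancedSet pos neg (f ⁻¹' {i}) := by
  obtain ⟨p, ⟨e⟩⟩ := Finite.exists_equiv_fin V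
  refine ⟨p, e, fun i => ⟨∅, fun u hu v hv => ?_⟩⟩
  obtain rfl : u = v := e.injective (hu.trans hv.symm)
  exact ⟨fun _ => Iff.rfl, fun h => absurd h (hloop u)⟩

theorem le_balancedChromatic [Finite V] (hloop : ∀ v, ¬neg v v) {b : ℕ}
    (hb : ∀ p c, IsSignedColoring pos neg p c → b ≤ p) : b ≤ balancedChromatic pos neg := by
  refine le_csInf (exists_partition_isBalancedSet hloop) ?_
  rintro p ⟨f, hf⟩
  obtain ⟨c, hc⟩ := exists_isSignedColoring hf
  exact hb p c hc

end SignedColoring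

section Integers

open Classical in
/-- The element of least absolute value of a set of integers. It is `0` on the empty set, and the
choice between `a` and `-a` is the positive one if both are present. -/
noncomputable def absMin (s : Set ℤ) : ℤ :=
  if ((sInf (Int.natAbs '' s) : ℕ) : ℤ) ∈ s then ((sInf (Int.natAbs '' s) : ℕ) : ℤ)
  else -((sInf (Int.natAbs '' s) : ℕ) : ℤ)

theorem absMin_mem {s : Set ℤ} (hs : s.Nonempty) : absMin s ∈ s := by
  obtain ⟨a, ha, hmin⟩ := Nat.sInf_mem (hs.image Int.natAbs)
  rw [absMin, ← hmin]
  split_ifs with h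
  · exact h
  · rcases Int.natAbs_eq a with h_eq | h_eq
    · exact absurd (h_eq ▸ ha) h
    · exact h_eq ▸ ha

theorem natAbs_absMin (s : Set ℤ) : (absMin s).natAbs = sInf (Int.natAbs '' s) := by
  rw [absMin]
  split_ifs
  · exact Int.natAbs_natCast _
  · rw [Int.natAbs_neg, Int.natAbs_natCast]

theorem absMin_neg {s : Set ℤ} (hs : s.Nonempty) (hanti : ∀ a ∈ s, -a ∉ s) :
    absMin (-s) = -absMin s := by
  have himage : Int.natAbs '' (-s) = Int.natAbs '' s := by
    rw [← Set.image_neg_eq_neg, Set.image_image]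
    simp only [Int.natAbs_neg]
  have habs : (absMin (-s)).natAbs = (absMin s).natAbs := by
    rw [natAbs_absMin, natAbs_absMin, himage]
  exact (Int.natAbs_eq_natAbs_iff.1 habs).resolve_left fun h =>
    hanti _ (absMin_mem hs) (h ▸ absMin_mem hs.neg)

theorem natAbs_add_mul_sign {a : ℤ} (ha : a ≠ 0) (k : ℕ) :
    (a + k * a.sign).natAbs = a.natAbs + k := by
  rcases ha.lt_or_gt with h | h
  · rw [Int.sign_eq_neg_one_of_neg h]
    omega
  · rw [Int.sign_eq_one_of_pos h]
    omega

theorem add_mul_sign_injective (k : ℕ) : Function.Injective fun a : ℤ => a + k * a.sign := by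
  intro a b hab
  have hsign : a.sign = b.sign := by
    grind [Int.sign_trichotomy a, Int.sign_eq_one_iff_pos, Int.sign_eq_neg_one_iff_neg]
  simpa [hsign] using hab

end Integers

section SignedKneser

variable {n k p : ℕ}

instance finite_ksVertex (n k : ℕ) : Finite (KSVertex n k) := by
  refine Set.Finite.to_subtype (s := {A | IsSignedKSubset n k A})
    ((Icc (-n : ℤ) n).powerset.finite_toSet.subset fun A hA => ?_)
  rw [mem_coe, mem_powerset]
  intro a ha
  have := (hA.2.1 a ha).2
  rw [mem_Icc]
  omega

theorem not_ksNeg_self (hk : 1 ≤ k) (A : KSVertex n k) : ¬ksNeg A.1 A.1 := by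
  intro h
  have hcard := A.2.1
  rw [(disjoint_self_iff_empty _).1 h, card_empty] at hcard
  omega

/-- The signed colors seen from the signed set `S`: those of the vertices contained in `S`, and the
opposites of those of the vertices contained in `-S`. -/
def visibleColors (c : KSVertex n k → ℤ) (S : Finset ℤ) : Set ℤ :=
  {a | (∃ A, A.1 ⊆ S ∧ c A = a) ∨ ∃ A, A.1 ⊆ -S ∧ c A = -a}

theorem visibleColors_neg (c : KSVertex n k → ℤ) (S : Finset ℤ) :
    visibleColors c (-S) = -visibleColors c S := by
  ext a
  simp only [visibleColors, Set.mem_neg, Set.mem_ofPred_eq, neg_neg, or_comm]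

theorem visibleColors_mono (c : KSVertex n k → ℤ) : Monotone (visibleColors c) := by
  rintro S T hST a (⟨A, hA, ha⟩ | ⟨A, hA, ha⟩)
  · exact .inl ⟨A, hA.trans hST, ha⟩
  · exact .inr ⟨A, hA.trans (neg_subset_neg hST), ha⟩

theorem visibleColors_nonempty (c : KSVertex n k → ℤ) {S : Finset ℤ} (hS : IsSignedSet n S)
    (hk : k ≤ #S) : (visibleColors c S).Nonempty := by
  obtain ⟨A, hAS, hA⟩ := exists_subset_card_eq hk
  obtain ⟨-, -, hrange, hanti⟩ := hS
  exact ⟨_, .inl ⟨⟨A, hA, fun a ha => hrange a (hAS ha), fun a ha h => hanti a (hAS ha) (hAS h)⟩,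
    hAS, rfl⟩⟩

theorem ksPos_of_subset {S A B : Finset ℤ} (hS : IsSignedSet n S) (hA : A ⊆ S) (hB : B ⊆ S) :
    ksPos A B :=
  fun a ha h => hS.2.2.2 a (hA ha) (hB h)

theorem ksNeg_of_subset {S A B : Finset ℤ} (hS : IsSignedSet n S) (hA : A ⊆ S) (hB : B ⊆ -S) :
    ksNeg A B :=
  disjoint_left.2 fun a ha h => hS.2.2.2 a (hA ha) (mem_neg'.1 (hB h))

section

variable {c : KSVertex n k → ℤ}
  (hc : IsSignedColoring (fun A B : KSVertex n k => ksPos A.1 B.1)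
    (fun A B : KSVertex n k => ksNeg A.1 B.1) p c)

include hc

theorem neg_notMem_visibleColors {S : Finset ℤ} (hS : IsSignedSet n S) {a : ℤ}
    (ha : a ∈ visibleColors c S) : -a ∉ visibleColors c S := by
  rcases ha with ⟨A, hA, ha⟩ | ⟨A, hA, ha⟩ <;> rintro (⟨B, hB, hb⟩ | ⟨B, hB, hb⟩)
  · exact hc.ne_neg_of_pos A B (ksPos_of_subset hS hA hB) (by rw [ha, hb, neg_neg])
  · exact hc.ne_of_neg A B (ksNeg_of_subset hS hA hB) (by rw [ha, hb, neg_neg])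
  · exact hc.ne_of_neg B A (ksNeg_of_subset hS hB hA) (by rw [ha, hb])
  · exact hc.ne_neg_of_pos A B (ksPos_of_subset hS.neg hA hB) (by rw [ha, hb, neg_neg])

theorem ne_zero_of_mem_visibleColors {S : Finset ℤ} {a : ℤ} (ha : a ∈ visibleColors c S) :
    a ≠ 0 := by
  rcases ha with ⟨A, -, ha⟩ | ⟨A, -, ha⟩
  · exact ha ▸ hc.ne_zero A
  · exact neg_ne_zero.1 (ha ▸ hc.ne_zero A)

theorem natAbs_le_of_mem_visibleColors {S : Finset ℤ} {a : ℤ} (ha : a ∈ visibleColors c S) :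
    a.natAbs ≤ p := by
  rcases ha with ⟨A, -, ha⟩ | ⟨A, -, ha⟩
  · exact ha ▸ hc.natAbs_le A
  · exact a.natAbs_neg ▸ ha ▸ hc.natAbs_le A

end

/-- The labeling of signed sets to which Tucker's lemma is applied. Sets that contain no vertex of
`KS(n, k + 1)` are labeled by their cardinality, signed by the entry of least absolute value. The
others are labeled by the visible color of least absolute value, moved away from `0` by `k`. -/
noncomputable def tuckerLabel (c : KSVertex n (k + 1) → ℤ) (S : Finset ℤ) : ℤ :=
  if #S ≤ k then #S * (absMin S).sign
  else absMin (visibleColors c S) + k * (absMin (visibleColors c S)).sign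

theorem tuckerLabel_of_card_le (c : KSVertex n (k + 1) → ℤ) {S : Finset ℤ} (hSk : #S ≤ k) :
    tuckerLabel c S = #S * (absMin S).sign := if_pos hSk

theorem tuckerLabel_of_lt_card (c : KSVertex n (k + 1) → ℤ) {S : Finset ℤ} (hSk : k < #S) :
    tuckerLabel c S = absMin (visibleColors c S) + k * (absMin (visibleColors c S)).sign :=
  if_neg hSk.not_ge

theorem natAbs_tuckerLabel_of_card_le (c : KSVertex n (k + 1) → ℤ) {S : Finset ℤ}
    (hS : IsSignedSet n S) (hSk : #S ≤ k) : (tuckerLabel c S).natAbs = #S := by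
  have hmin : absMin S ≠ 0 := (hS.2.2.1 _ (absMin_mem hS.1)).1
  rw [tuckerLabel_of_card_le c hSk, Int.natAbs_mul, Int.natAbs_sign_of_ne_zero hmin, mul_one,
    Int.natAbs_natCast]

section

variable {c : KSVertex n (k + 1) → ℤ}
  (hc : IsSignedColoring (fun A B : KSVertex n (k + 1) => ksPos A.1 B.1)
    (fun A B : KSVertex n (k + 1) => ksNeg A.1 B.1) p c)

include hc

theorem natAbs_tuckerLabel_of_lt_card {S : Finset ℤ} (hS : IsSignedSet n S) (hSk : k < #S) :
    (tuckerLabel c S).natAbs = (absMin (visibleColors c S)).natAbs + k := by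
  rw [tuckerLabel_of_lt_card c hSk, natAbs_add_mul_sign
    (ne_zero_of_mem_visibleColors hc (absMin_mem (visibleColors_nonempty c hS hSk)))]

theorem isAntipodalLabeling_tuckerLabel : IsAntipodalLabeling n (tuckerLabel c) := by
  refine ⟨fun S hS => ?_, fun S hS => ?_⟩
  · rw [← Int.natAbs_ne_zero]
    rcases le_or_gt #S k with hSk | hSk
    · rw [natAbs_tuckerLabel_of_card_le c hS hSk]
      exact hS.1.card_pos.ne'
    · have hvis := absMin_mem (visibleColors_nonempty c hS hSk)
      rw [natAbs_tuckerLabel_of_lt_card hc hS hSk]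
      exact (Nat.add_pos_left (Int.natAbs_pos.2 (ne_zero_of_mem_visibleColors hc hvis)) k).ne'
  · rcases le_or_gt #S k with hSk | hSk
    · rw [tuckerLabel_of_card_le c hSk, tuckerLabel_of_card_le c (by rwa [card_neg]), card_neg,
        coe_neg, absMin_neg hS.1 hS.2.2.2, Int.sign_neg, mul_neg]
    · rw [tuckerLabel_of_lt_card c hSk, tuckerLabel_of_lt_card c (by rwa [card_neg]),
        visibleColors_neg, absMin_neg (visibleColors_nonempty c hS hSk)
          fun _ => neg_notMem_visibleColors hc hS, Int.sign_neg, mul_neg, neg_add]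

theorem natAbs_tuckerLabel_le {S : Finset ℤ} (hS : IsSignedSet n S) :
    (tuckerLabel c S).natAbs ≤ k + p := by
  rcases le_or_gt #S k with hSk | hSk
  · rw [natAbs_tuckerLabel_of_card_le c hS hSk]
    exact hSk.trans (k.le_add_right p)
  · rw [natAbs_tuckerLabel_of_lt_card hc hS hSk, add_comm]
    gcongr
    exact natAbs_le_of_mem_visibleColors hc (absMin_mem (visibleColors_nonempty c hS hSk))

theorem tuckerLabel_ne_neg {S T : Finset ℤ} (hS : IsSignedSet n S) (hT : IsSignedSet n T)
    (hST : S ⊆ T) : tuckerLabel c S ≠ -tuckerLabel c T := by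
  intro h
  have habs : (tuckerLabel c S).natAbs = (tuckerLabel c T).natAbs := by rw [h, Int.natAbs_neg]
  rcases le_or_gt #T k with hTk | hTk
  · rw [natAbs_tuckerLabel_of_card_le c hS ((card_le_card hST).trans hTk),
      natAbs_tuckerLabel_of_card_le c hT hTk] at habs
    obtain rfl := eq_of_subset_of_card_le hST habs.ge
    exact (isAntipodalLabeling_tuckerLabel hc).ne_zero S hS (self_eq_neg.1 h)
  have hvisT := absMin_mem (visibleColors_nonempty c hT hTk)
  rcases le_or_gt #S k with hSk | hSk
  · rw [natAbs_tuckerLabel_of_card_le c hS hSk, natAbs_tuckerLabel_of_lt_card hc hT hTk] at habs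
    have := Int.natAbs_pos.2 (ne_zero_of_mem_visibleColors hc hvisT)
    omega
  · have hvisS := absMin_mem (visibleColors_nonempty c hS hSk)
    have hcolors : absMin (visibleColors c S) = -absMin (visibleColors c T) := by
      apply add_mul_sign_injective k
      beta_reduce
      rwa [Int.sign_neg, mul_neg, ← neg_add, ← tuckerLabel_of_lt_card c hSk,
        ← tuckerLabel_of_lt_card c hTk]
    rw [hcolors] at hvisS
    exact neg_notMem_visibleColors hc hT hvisT (visibleColors_mono c hST hvisS)

theorem le_add_of_isSignedColoring : n ≤ k + p :=
  octahedral_tucker (isAntipodalLabeling_tuckerLabel hc) (fun _ => natAbs_tuckerLabel_le hc)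
    fun _ _ => tuckerLabel_ne_neg hc

end

end SignedKneser

/-- for all `n ≥ k ≥ 1`, `χ_b(KS(n,k)) ≥ n−k+1`. -/
theorem signedKneser_lower_bound (n k : ℕ) (hk : 1 ≤ k) (hkn : k ≤ n) :
    n - k + 1 ≤ balancedChromatic (fun A B : KSVertex n k => ksPos A.1 B.1)
        (fun A B : KSVertex n k => ksNeg A.1 B.1) := by
  obtain ⟨k, rfl⟩ := Nat.exists_eq_add_of_le' hk
  refine le_balancedChromatic (not_ksNeg_self hk) fun p c hc => ?_
  have := le_add_of_isSignedColoring hc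
  omega
end

section
/- For every cover of S^d by d antipodally symmetric open sets C_1,…,C_d, at least one C_i contains two antipodal points in the same connected component. (Signed Borsuk–Ulam, open form) -/
/-!
Suppose no `C i` contains antipodal points in one of its components. Then the components of the open
cone over `C i` come in opposite pairs, and choosing one component from each pair gives an open set
`A i` that contains no antipodal points and covers, together with `-A i`, the cone over `C i`. Ky
Fan's theorem for the sets `A i` yields `d + 1` distinct indices, although there are only `d`.

For Ky Fan's theorem, triangulate the sphere by the boundary of a cross-polytope and subdivide it
barycentrically until every vertex `x` can be given, antipodally, a signed label `(i, ε)` such that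
`ε • A i` contains all neighbours of `x`; then no simplex carries complementary labels. Modulo 2,
the number of facets of such a simplex whose signs alternate along increasing labels starting with
`+` is the number of first signs for which the simplex itself alternates. Push the `k`-dimensional
hemisphere forward to a chain `h k` of labels. As the boundary of `h (k + 1)` is `h k` plus its
sign-reversed copy, the parity of the number of alternating simplices of `h k` does not depend on
`k`, and it is odd because the boundary of `h 0` is the empty simplex.
-/

open Finsupp (single)

/-- Mod 2 chains of simplices with vertices in `E`. A simplex is the multiset of its vertices:
unoriented, possibly with repeated vertices, and possibly empty, so that chains are augmented. -/
abbrev SimplexChain (E : Type*) := Multiset E →₀ ZMod 2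

namespace SimplexChain

noncomputable section

variable {E F G : Type*}

/-- The chains all of whose simplices belong to `P`. -/
abbrev supportedOn (P : Set (Multiset E)) : Submodule (ZMod 2) (SimplexChain E) :=
  Finsupp.supported (ZMod 2) (ZMod 2) P

/-- The join of a chain with the vertex `v`. -/
def cone (v : E) : Module.End (ZMod 2) (SimplexChain E) :=
  Finsupp.lmapDomain (ZMod 2) (ZMod 2) (v ::ₘ ·)

/-- The chain map induced by a map of vertices. -/
def push (f : E → F) : SimplexChain E →ₗ[ZMod 2] SimplexChain F :=
  Finsupp.lmapDomain (ZMod 2) (ZMod 2) (Multiset.map f)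

open Classical in
/-- The boundary operator of the augmented chain complex. -/
def boundary : Module.End (ZMod 2) (SimplexChain E) :=
  Finsupp.linearCombination (ZMod 2) fun s => (s.map fun x => single (s.erase x) 1).sum

@[simp]
lemma cone_single (v : E) (s : Multiset E) (a : ZMod 2) :
    cone v (single s a) = single (v ::ₘ s) a := by
  simp [cone]

@[simp]
lemma push_single (f : E → F) (s : Multiset E) (a : ZMod 2) :
    push f (single s a) = single (s.map f) a := by
  simp [push]

open Classical in
lemma boundary_single (s : Multiset E) :
    boundary (single s 1) = (s.map fun x => single (s.erase x) (1 : ZMod 2)).sum := by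
  simp [boundary]

lemma single_mem_supportedOn {P : Set (Multiset E)} {s : Multiset E} (hs : s ∈ P) :
    single s 1 ∈ supportedOn P :=
  Finsupp.single_mem_supported _ _ hs

section LinearMaps

variable {M : Type*} [AddCommMonoid M] [Module (ZMod 2) M]

lemma linearMap_ext {f g : SimplexChain E →ₗ[ZMod 2] M}
    (h : ∀ s, f (single s 1) = g (single s 1)) : f = g := by
  ext s
  simpa using h s

lemma map_mem_of_mem_supportedOn {P : Set (Multiset E)} {f : SimplexChain E →ₗ[ZMod 2] M}
    {p : Submodule (ZMod 2) M} (h : ∀ s ∈ P, f (single s 1) ∈ p) {c : SimplexChain E}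
    (hc : c ∈ supportedOn P) : f c ∈ p := by
  rw [supportedOn, Finsupp.supported_eq_span_single] at hc
  refine (Submodule.span_le (p := p.comap f)).mpr ?_ hc
  rintro _ ⟨s, hs, rfl⟩
  exact h s hs

lemma linearMap_congr {P : Set (Multiset E)} {f g : SimplexChain E →ₗ[ZMod 2] M}
    (h : ∀ s ∈ P, f (single s 1) = g (single s 1)) {c : SimplexChain E}
    (hc : c ∈ supportedOn P) : f c = g c := by
  rw [supportedOn, Finsupp.supported_eq_span_single] at hc
  refine LinearMap.eqOn_span ?_ hc
  rintro _ ⟨s, hs, rfl⟩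
  exact h s hs

end LinearMaps

lemma push_push (f : E → F) (g : F → G) (c : SimplexChain E) :
    push g (push f c) = push (g ∘ f) c := by
  refine LinearMap.congr_fun (f := push g ∘ₗ push f) (linearMap_ext fun s => ?_) c
  simp

lemma push_congr {f g : E → F} {c : SimplexChain E}
    (hc : c ∈ supportedOn {s | ∀ x ∈ s, f x = g x}) : push f c = push g c :=
  linearMap_congr (fun s hs => by rw [push_single, push_single, Multiset.map_congr rfl hs]) hc

lemma push_cone (f : E → F) (v : E) (c : SimplexChain E) :
    push f (cone v c) = cone (f v) (push f c) := by
  refine LinearMap.congr_fun (f := push f ∘ₗ cone v) (g := cone (f v) ∘ₗ push f)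
    (linearMap_ext fun s => ?_) c
  simp

@[simp]
lemma boundary_single_zero : boundary (single (0 : Multiset E) 1) = 0 := by
  simp [boundary_single]

lemma boundary_single_cons (v : E) (s : Multiset E) :
    boundary (single (v ::ₘ s) 1) = single s 1 + cone v (boundary (single s 1)) := by
  classical
  rw [boundary_single, boundary_single, Multiset.map_cons, Multiset.sum_cons,
    Multiset.erase_cons_head, map_multiset_sum, Multiset.map_map]
  congr 2
  refine Multiset.map_congr rfl fun x hx => ?_
  rw [Multiset.erase_cons_tail_of_mem hx, Function.comp_apply, cone_single]

lemma boundary_cone (v : E) (c : SimplexChain E) :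
    boundary (cone v c) = c + cone v (boundary c) := by
  refine LinearMap.congr_fun (f := boundary ∘ₗ cone v) (g := LinearMap.id + cone v ∘ₗ boundary)
    (linearMap_ext fun s => ?_) c
  simp [boundary_single_cons]

lemma boundary_boundary (c : SimplexChain E) : boundary (boundary c) = 0 := by
  refine LinearMap.congr_fun (f := boundary ∘ₗ boundary) (g := 0) (linearMap_ext fun s => ?_) c
  induction s using Multiset.induction_on with
  | empty => simp
  | cons v s ih =>
    simp only [LinearMap.comp_apply, LinearMap.zero_apply] at ih ⊢
    rw [boundary_single_cons, map_add, boundary_cone, ih, map_zero, add_zero, ZModModule.add_self]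

lemma boundary_push (f : E → F) (c : SimplexChain E) :
    boundary (push f c) = push f (boundary c) := by
  refine LinearMap.congr_fun (f := boundary ∘ₗ push f) (g := push f ∘ₗ boundary)
    (linearMap_ext fun s => ?_) c
  induction s using Multiset.induction_on with
  | empty => simp
  | cons v s ih =>
    simp only [LinearMap.comp_apply, push_single] at ih ⊢
    rw [Multiset.map_cons, boundary_single_cons, boundary_single_cons, ih, map_add, push_single,
      push_cone]

lemma boundary_single_mem {P : Set (Multiset E)} {s : Multiset E}
    (h : ∀ x t, x ::ₘ t = s → t ∈ P) : boundary (single s 1) ∈ supportedOn P := by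
  classical
  rw [boundary_single]
  refine multiset_sum_mem _ fun c hc => ?_
  obtain ⟨x, hx, rfl⟩ := Multiset.mem_map.mp hc
  exact single_mem_supportedOn (h x _ (Multiset.cons_erase hx))

section Hemispheres

variable [InvolutiveNeg E]

/-- The upper hemisphere of dimension `k` in the antipodally symmetric triangulation of the sphere
whose vertices are the points `±e i`: the upper hemisphere of dimension `k + 1` is the cone with
apex `e (k + 1)` over the sphere formed by the two hemispheres of dimension `k`. -/
def hemisphere (e : ℕ → E) : ℕ → SimplexChain E
  | 0 => single {e 0} 1
  | k + 1 => cone (e (k + 1)) (hemisphere e k + push Neg.neg (hemisphere e k))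

lemma boundary_hemisphere_zero (e : ℕ → E) : boundary (hemisphere e 0) = single 0 1 := by
  rw [hemisphere, ← Multiset.cons_zero, boundary_single_cons]
  simp

lemma push_neg_push_neg (c : SimplexChain E) : push Neg.neg (push Neg.neg c) = c := by
  refine LinearMap.congr_fun (f := push Neg.neg ∘ₗ push Neg.neg) (g := LinearMap.id)
    (linearMap_ext fun s => ?_) c
  simp

lemma boundary_hemisphere_succ (e : ℕ → E) (k : ℕ) :
    boundary (hemisphere e (k + 1)) = hemisphere e k + push Neg.neg (hemisphere e k) := by
  suffices h : boundary (hemisphere e k + push Neg.neg (hemisphere e k)) = 0 by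
    rw [hemisphere, boundary_cone, h, map_zero, add_zero]
  induction k with
  | zero => simp [boundary_push, boundary_hemisphere_zero, ZModModule.add_self]
  | succ k ih =>
    rw [map_add, boundary_push, hemisphere, boundary_cone, ih, map_zero, add_zero, map_add,
      push_neg_push_neg, add_comm (push _ _), ZModModule.add_self]

end Hemispheres

lemma hemisphere_mem [AddCommGroup E] (e : ℕ → E) (k : ℕ) :
    hemisphere e k ∈ supportedOn {s | s.card = k + 1 ∧
      ∃ σ : ℕ → ℤˣ, {x | x ∈ s} ⊆ (fun i => σ i • e i) '' Set.Iic k} := by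
  induction k with
  | zero => exact single_mem_supportedOn ⟨rfl, 1, by simp⟩
  | succ k ih =>
    refine map_mem_of_mem_supportedOn ?_
      (add_mem ih (map_mem_of_mem_supportedOn (f := push Neg.neg) ?_ ih))
    · rintro s ⟨hcard, σ, hσ⟩
      rw [cone_single]
      refine single_mem_supportedOn ⟨by simp [hcard], Function.update σ (k + 1) 1, fun x hx => ?_⟩
      rcases Multiset.mem_cons.mp hx with rfl | hx
      · exact ⟨k + 1, Set.self_mem_Iic, by simp⟩
      · obtain ⟨i, hi, rfl⟩ := hσ hx
        have hik : i < k + 1 := Nat.lt_succ_of_le hi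
        exact ⟨i, hik.le, by simp [Function.update_of_ne hik.ne]⟩
    · rintro s ⟨hcard, σ, hσ⟩
      rw [push_single]
      refine single_mem_supportedOn ⟨by simpa using hcard, -σ, fun x hx => ?_⟩
      obtain ⟨y, hy, rfl⟩ := Multiset.mem_map.mp hx
      obtain ⟨i, hi, rfl⟩ := hσ hy
      exact ⟨i, hi, Units.neg_smul _ _⟩

section Fan

variable {ι : Type*}

/-- The involution on signed labels that reverses the sign. -/
def flipSign : ι × ℤˣ → ι × ℤˣ := Prod.map id Neg.neg

lemma flipSign_flipSign (a : ι × ℤˣ) : flipSign (flipSign a) = a :=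
  Prod.ext rfl (neg_neg a.2)

lemma eq_or_eq_flipSign_of_fst_eq {a b : ι × ℤˣ} (h : a.1 = b.1) : a = b ∨ a = flipSign b :=
  (eq_or_ne a.2 b.2).imp (Prod.ext h) fun hne => Prod.ext h (Int.units_ne_iff_eq_neg.mp hne)

variable [LinearOrder ι]

/-- A simplex of signed labels is alternating, with first sign `ε`, if its labels are distinct and
their signs alternate along the increasing order of the labels, starting with `ε`. -/
inductive IsAlternating : ℤˣ → Multiset (ι × ℤˣ) → Prop
  | zero (ε : ℤˣ) : IsAlternating ε 0
  | cons {ε : ℤˣ} {i : ι} {s : Multiset (ι × ℤˣ)} (hlt : ∀ b ∈ s, i < b.1)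
      (hs : IsAlternating (-ε) s) : IsAlternating ε ((i, ε) ::ₘ s)

lemma isAlternating_cons_iff {ε : ℤˣ} {a : ι × ℤˣ} {s : Multiset (ι × ℤˣ)}
    (hlt : ∀ b ∈ s, a.1 < b.1) :
    IsAlternating ε (a ::ₘ s) ↔ a.2 = ε ∧ IsAlternating (-ε) s := by
  refine ⟨fun h => ?_, ?_⟩
  · generalize ht : a ::ₘ s = t at h
    cases h with
    | zero => exact absurd ht Multiset.cons_ne_zero
    | @cons _ i u hlt' hu =>
      rcases Multiset.cons_eq_cons.mp ht with ⟨rfl, rfl⟩ | ⟨-, v, rfl, rfl⟩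
      · exact ⟨rfl, hu⟩
      · exact absurd (hlt _ (Multiset.mem_cons_self _ _))
          (hlt' _ (Multiset.mem_cons_self _ _)).asymm
  · rintro ⟨rfl, hs⟩
    exact .cons hlt hs

lemma IsAlternating.nodup {ε : ℤˣ} {s : Multiset (ι × ℤˣ)} (h : IsAlternating ε s) : s.Nodup := by
  induction h with
  | zero => exact Multiset.nodup_zero
  | cons hlt _ ih => exact Multiset.nodup_cons.mpr ⟨fun hmem => (hlt _ hmem).false, ih⟩

lemma IsAlternating.map_flipSign {ε : ℤˣ} {s : Multiset (ι × ℤˣ)} (h : IsAlternating ε s) :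
    IsAlternating (-ε) (s.map flipSign) := by
  induction h with
  | zero => exact .zero _
  | cons hlt _ ih =>
    rw [Multiset.map_cons]
    refine .cons (fun b hb => ?_) ih
    obtain ⟨c, hc, rfl⟩ := Multiset.mem_map.mp hb
    exact hlt c hc

lemma isAlternating_map_flipSign_iff {ε : ℤˣ} {s : Multiset (ι × ℤˣ)} :
    IsAlternating ε (s.map flipSign) ↔ IsAlternating (-ε) s :=
  ⟨fun h => by simpa [flipSign_flipSign] using h.map_flipSign,
    fun h => by simpa using h.map_flipSign⟩

lemma IsAlternating.exists_strictMono {ε : ℤˣ} {s : Multiset (ι × ℤˣ)} (h : IsAlternating ε s)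
    {n : ℕ} (hn : s.card = n) :
    ∃ a : Fin n → ι, StrictMono a ∧ ∀ k, (a k, (-1) ^ (k : ℕ) * ε) ∈ s := by
  subst hn
  induction h with
  | zero => exact ⟨Fin.elim0, fun k => k.elim0, fun k => k.elim0⟩
  | @cons ε i s hlt _ ih =>
    obtain ⟨a, ha, hmem⟩ := ih
    rw [Multiset.card_cons]
    refine ⟨Fin.cons i a, Fin.strictMono_cons.mpr ⟨fun k => hlt _ (hmem k), ha⟩, Fin.cases ?_ ?_⟩
    · simp
    · intro k
      simpa [pow_succ] using Or.inr (hmem k)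

open Classical in
/-- The number modulo 2 of simplices of a chain that are alternating with first sign `ε`. -/
def alternatingCount (ε : ℤˣ) : SimplexChain (ι × ℤˣ) →ₗ[ZMod 2] ZMod 2 :=
  Finsupp.linearCombination (ZMod 2) fun s => if IsAlternating ε s then 1 else 0

open Classical in
lemma alternatingCount_single (ε : ℤˣ) (s : Multiset (ι × ℤˣ)) :
    alternatingCount ε (single s 1) = if IsAlternating ε s then 1 else 0 := by
  simp [alternatingCount]

lemma alternatingCount_push_flipSign (ε : ℤˣ) (c : SimplexChain (ι × ℤˣ)) :
    alternatingCount ε (push flipSign c) = alternatingCount (-ε) c := by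
  classical
  refine LinearMap.congr_fun (f := alternatingCount ε ∘ₗ push flipSign)
    (linearMap_ext fun s => ?_) c
  rw [LinearMap.comp_apply, push_single, alternatingCount_single, alternatingCount_single]
  exact if_congr isAlternating_map_flipSign_iff rfl rfl

lemma alternatingCount_cone {ε : ℤˣ} {a : ι × ℤˣ} {c : SimplexChain (ι × ℤˣ)}
    (hc : c ∈ supportedOn {s | ∀ b ∈ s, a.1 < b.1}) :
    alternatingCount ε (cone a c) = if a.2 = ε then alternatingCount (-ε) c else 0 := by
  classical
  split_ifs with ha
  · refine linearMap_congr (f := alternatingCount ε ∘ₗ cone a) (fun s hs => ?_) hc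
    rw [LinearMap.comp_apply, cone_single, alternatingCount_single, alternatingCount_single]
    exact if_congr ((isAlternating_cons_iff hs).trans (and_iff_right ha)) rfl rfl
  · refine linearMap_congr (f := alternatingCount ε ∘ₗ cone a) (g := 0) (fun s hs => ?_) hc
    rw [LinearMap.comp_apply, cone_single, alternatingCount_single]
    exact if_neg fun h => ha ((isAlternating_cons_iff hs).mp h).1

lemma alternatingCount_cone_cone_self (ε : ℤˣ) (a : ι × ℤˣ) (c : SimplexChain (ι × ℤˣ)) :
    alternatingCount ε (cone a (cone a c)) = 0 := by
  refine LinearMap.congr_fun (f := alternatingCount ε ∘ₗ cone a ∘ₗ cone a) (g := 0)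
    (linearMap_ext fun s => ?_) c
  have hs : ¬ IsAlternating ε (a ::ₘ a ::ₘ s) := fun h => by simpa using h.nodup
  simp [alternatingCount_single, hs]

lemma exists_eq_cons_forall_apply_le {α : Type*} (f : α → ι) {s : Multiset α} (hs : s ≠ 0) :
    ∃ a t, s = a ::ₘ t ∧ ∀ b ∈ t, f a ≤ f b := by
  classical
  obtain ⟨a, ha, hmin⟩ := s.toFinset.exists_min_image f (Multiset.toFinset_nonempty.mpr hs)
  obtain ⟨t, rfl⟩ := Multiset.exists_cons_of_mem (Multiset.mem_toFinset.mp ha)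
  exact ⟨a, t, rfl, fun b hb => hmin b (by simp [hb])⟩

lemma alternatingCount_boundary_single {s : Multiset (ι × ℤˣ)} (hs : ∀ a ∈ s, flipSign a ∉ s)
    (ε : ℤˣ) : alternatingCount ε (boundary (single s 1)) =
      alternatingCount ε (single s 1) + alternatingCount (-ε) (single s 1) := by
  induction s using Multiset.strongInductionOn generalizing ε with
  | ih s ih =>
  obtain rfl | hne := eq_or_ne s 0
  · simp [alternatingCount_single, IsAlternating.zero, ZModModule.add_self]
  obtain ⟨a, t, rfl, hle⟩ := exists_eq_cons_forall_apply_le Prod.fst hne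
  -- If `a` is repeated, the facets opposite two copies of `a` cancel, and the others repeat `a`.
  by_cases hat : a ∈ t
  · obtain ⟨u, rfl⟩ := Multiset.exists_cons_of_mem hat
    rw [boundary_single_cons, boundary_single_cons, map_add (cone a), cone_single, ← add_assoc,
      ZModModule.add_self, zero_add, ← cone_single, ← cone_single]
    simp only [alternatingCount_cone_cone_self, add_zero]
  have hlt : ∀ b ∈ t, a.1 < b.1 := fun b hb => (hle b hb).lt_of_ne fun h => by
    rcases eq_or_eq_flipSign_of_fst_eq h.symm with rfl | rfl
    · exact hat hb
    · exact hs a (Multiset.mem_cons_self a t) (Multiset.mem_cons_of_mem hb)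
  have hfacets : boundary (single t 1) ∈ supportedOn {u | ∀ b ∈ u, a.1 < b.1} := by
    refine boundary_single_mem fun x u hu b hb => hlt b ?_
    exact hu ▸ Multiset.mem_cons_of_mem hb
  have ht := ih t (Multiset.lt_cons_self t a)
    (fun b hb h => hs b (Multiset.mem_cons_of_mem hb) (Multiset.mem_cons_of_mem h)) (-ε)
  rw [neg_neg] at ht
  rw [boundary_single_cons, map_add, alternatingCount_cone hfacets, ht, ← cone_single,
    alternatingCount_cone (single_mem_supportedOn hlt),
    alternatingCount_cone (single_mem_supportedOn hlt), neg_neg]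
  obtain hε | hε := eq_or_ne a.2 ε
  · have hε' : a.2 ≠ -ε := Int.units_ne_iff_eq_neg.mpr (by rw [neg_neg, hε])
    rw [if_pos hε, if_pos hε, if_neg hε', add_comm (alternatingCount (-ε) _), ← add_assoc,
      ZModModule.add_self, zero_add, add_zero]
  · rw [if_neg hε, if_neg hε, if_pos (Int.units_ne_iff_eq_neg.mp hε), add_comm]

theorem exists_isAlternating_mem_support {h : ℕ → SimplexChain (ι × ℤˣ)} {d : ℕ}
    (hzero : boundary (h 0) = single 0 1)
    (hsucc : ∀ k < d, boundary (h (k + 1)) = h k + push flipSign (h k))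
    (hfree : ∀ k ≤ d, h k ∈ supportedOn {s | ∀ a ∈ s, flipSign a ∉ s}) :
    ∃ s ∈ (h d).support, ∃ ε, IsAlternating ε s := by
  have hboundary : ∀ k ≤ d, alternatingCount 1 (boundary (h k)) =
      alternatingCount 1 (h k) + alternatingCount (-1) (h k) := fun k hk =>
    linearMap_congr (f := alternatingCount 1 ∘ₗ boundary)
      (g := alternatingCount 1 + alternatingCount (-1))
      (fun s hs => alternatingCount_boundary_single hs 1) (hfree k hk)
  have hodd : ∀ k ≤ d, alternatingCount 1 (boundary (h k)) = 1 := by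
    intro k hk
    induction k with
    | zero => simp [hzero, alternatingCount_single, IsAlternating.zero]
    | succ k ih =>
      rw [hsucc k hk, map_add, alternatingCount_push_flipSign, ← hboundary k (by omega),
        ih (by omega)]
  by_contra! hnone
  have hcount : ∀ ε, alternatingCount ε (h d) = 0 := fun ε =>
    linearMap_congr (g := 0) (P := ↑(h d).support)
      (fun s hs => by simp [alternatingCount_single, hnone s hs ε]) (fun _ hs => hs)
  have := hodd d le_rfl
  rw [hboundary d le_rfl, hcount, hcount, add_zero] at this
  exact zero_ne_one this

end Fan

section Subdivision

variable {V : Type*} [AddCommGroup V] [Module ℝ V]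

/-- The barycenter of the vertices of a nonempty simplex, counted with multiplicity. -/
def barycenter (s : Multiset V) : V :=
  (s.card : ℝ)⁻¹ • s.sum

lemma barycenter_map_neg (s : Multiset V) : barycenter (s.map Neg.neg) = -barycenter s := by
  rw [barycenter, barycenter, Multiset.card_map, Multiset.sum_map_neg', smul_neg]

lemma barycenter_cons (v : V) (s : Multiset V) :
    barycenter (v ::ₘ s) =
      AffineMap.lineMap v (barycenter s) ((s.card : ℝ) / (s.card + 1)) := by
  obtain rfl | hs := eq_or_ne s 0
  · simp [barycenter]
  have hcard : (s.card : ℝ) ≠ 0 := by simpa using hs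
  rw [AffineMap.lineMap_apply_module, barycenter, barycenter, Multiset.card_cons,
    Multiset.sum_cons, Nat.cast_succ, smul_add, smul_smul]
  congr 2 <;> field_simp
  ring

lemma barycenter_mem {K : Set V} (hK : Convex ℝ K) {s : Multiset V} (hs : s ≠ 0)
    (hsK : ∀ x ∈ s, x ∈ K) : barycenter s ∈ K := by
  induction s using Multiset.induction_on with
  | empty => exact absurd rfl hs
  | cons v s ih =>
    have hv := hsK v (Multiset.mem_cons_self v s)
    obtain rfl | hs' := eq_or_ne s 0
    · simpa [barycenter] using hv
    · rw [barycenter_cons]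
      refine hK.lineMap_mem hv (ih hs' fun x hx => hsK x (Multiset.mem_cons_of_mem hx))
        ⟨by positivity, div_le_one_of_le₀ (by linarith) (by positivity)⟩

open Classical in
/-- The barycentric subdivision of a simplex: the cone, with apex the barycenter, over the
subdivisions of its facets. -/
def subdivideSimplex (s : Multiset V) : SimplexChain V :=
  if s = 0 then single 0 1
  else cone (barycenter s) (s.attach.map fun ⟨x, _⟩ => subdivideSimplex (s.erase x)).sum
termination_by s.card
decreasing_by exact Multiset.card_erase_lt_of_mem ‹_›

/-- The barycentric subdivision operator on chains. -/
def subdivision : Module.End (ZMod 2) (SimplexChain V) :=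
  Finsupp.linearCombination (ZMod 2) subdivideSimplex

@[simp]
lemma subdivision_single_zero : subdivision (single (0 : Multiset V) 1) = single 0 1 := by
  simp [subdivision, subdivideSimplex]

lemma subdivision_pow_single_zero (N : ℕ) :
    (subdivision ^ N) (single (0 : Multiset V) 1) = single 0 1 := by
  rw [Module.End.pow_apply]
  exact Function.iterate_fixed subdivision_single_zero N

lemma subdivision_single {s : Multiset V} (hs : s ≠ 0) :
    subdivision (single s 1) = cone (barycenter s) (subdivision (boundary (single s 1))) := by
  classical
  rw [boundary_single, map_multiset_sum, Multiset.map_map]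
  simp only [subdivision, Finsupp.linearCombination_single, one_smul, Function.comp_apply]
  rw [subdivideSimplex, if_neg hs]
  congr 2
  exact Multiset.attach_map_val' s fun x => subdivideSimplex (s.erase x)

lemma commute_boundary_subdivision :
    Commute (boundary : Module.End (ZMod 2) (SimplexChain V)) subdivision := by
  refine linearMap_ext fun s => ?_
  induction s using Multiset.strongInductionOn with
  | ih s ih =>
  obtain rfl | hs := eq_or_ne s 0
  · simp
  have hfacets : boundary (subdivision (boundary (single s 1))) =
      subdivision (boundary (boundary (single s 1))) := by
    refine linearMap_congr (f := boundary * subdivision) (g := subdivision * boundary) ih ?_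
    exact boundary_single_mem fun x t ht => ht ▸ Multiset.lt_cons_self t x
  rw [Module.End.mul_apply, Module.End.mul_apply, subdivision_single hs, boundary_cone, hfacets,
    boundary_boundary, map_zero, map_zero, add_zero]

lemma commute_push_neg_subdivision :
    Commute (push Neg.neg : Module.End (ZMod 2) (SimplexChain V)) subdivision := by
  refine linearMap_ext fun s => ?_
  induction s using Multiset.strongInductionOn with
  | ih s ih =>
  obtain rfl | hs := eq_or_ne s 0
  · simp
  have hs' : s.map Neg.neg ≠ 0 := by simpa using hs
  have hfacets : push Neg.neg (subdivision (boundary (single s 1))) =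
      subdivision (push Neg.neg (boundary (single s 1))) := by
    refine linearMap_congr (f := push Neg.neg * subdivision) (g := subdivision * push Neg.neg)
      ih ?_
    exact boundary_single_mem fun x t ht => ht ▸ Multiset.lt_cons_self t x
  rw [Module.End.mul_apply, Module.End.mul_apply, subdivision_single hs, push_cone, hfacets,
    ← boundary_push, push_single, subdivision_single hs', barycenter_map_neg]

lemma boundary_subdivision_pow (N : ℕ) (c : SimplexChain V) :
    boundary ((subdivision ^ N) c) = (subdivision ^ N) (boundary c) := by
  rw [← Module.End.mul_apply, (commute_boundary_subdivision.pow_right N).eq, Module.End.mul_apply]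

lemma push_neg_subdivision_pow (N : ℕ) (c : SimplexChain V) :
    push Neg.neg ((subdivision ^ N) c) = (subdivision ^ N) (push Neg.neg c) := by
  rw [← Module.End.mul_apply, (commute_push_neg_subdivision.pow_right N).eq, Module.End.mul_apply]

theorem exists_isAlternating_map_of_mem_supportedOn {ι : Type*} [LinearOrder ι]
    {e : ℕ → V} {label : V → ι × ℤˣ} {N d : ℕ}
    (hmem : ∀ k ≤ d, (subdivision ^ N) (hemisphere e k) ∈ supportedOn {s | ∀ x ∈ s,
      label (-x) = flipSign (label x) ∧ ∀ y ∈ s, label y ≠ flipSign (label x)}) :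
    ∃ s ∈ ((subdivision ^ N) (hemisphere e d)).support, ∃ ε, IsAlternating ε (s.map label) := by
  classical
  let h (k : ℕ) : SimplexChain (ι × ℤˣ) := push label ((subdivision ^ N) (hemisphere e k))
  have hbase : boundary (h 0) = single 0 1 := by
    rw [boundary_push, boundary_subdivision_pow, boundary_hemisphere_zero,
      subdivision_pow_single_zero, push_single, Multiset.map_zero]
  have hstep (k) (hk : k < d) : boundary (h (k + 1)) = h k + push flipSign (h k) := by
    rw [boundary_push, boundary_subdivision_pow, boundary_hemisphere_succ, map_add, map_add,
      ← push_neg_subdivision_pow, push_push, push_push]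
    congr 1
    exact push_congr (Finsupp.supported_mono (fun s hs x hx => (hs x hx).1) (hmem k hk.le))
  have hfree (k) (hk : k ≤ d) : h k ∈ supportedOn {s | ∀ a ∈ s, flipSign a ∉ s} := by
    refine map_mem_of_mem_supportedOn (fun s hs => ?_) (hmem k hk)
    rw [push_single]
    refine single_mem_supportedOn fun a ha ha' => ?_
    obtain ⟨x, hx, rfl⟩ := Multiset.mem_map.mp ha
    obtain ⟨y, hy, hxy⟩ := Multiset.mem_map.mp ha'
    exact (hs x hx).2 y hy hxy
  obtain ⟨t, ht, ε, halt⟩ := exists_isAlternating_mem_support hbase hstep hfree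
  obtain ⟨s, hs, rfl⟩ := Finset.mem_image.mp (Finsupp.mapDomain_support ht)
  exact ⟨s, hs, ε, halt⟩

end Subdivision

section Mesh

variable {V : Type*} [SeminormedAddCommGroup V] [NormedSpace ℝ V]

lemma dist_barycenter_le {s : Multiset V} {n : ℕ} (hcard : s.card ≤ n + 1) {δ : ℝ}
    (hδ : ∀ x ∈ s, ∀ y ∈ s, dist x y ≤ δ) {v : V} (hv : v ∈ s) :
    dist v (barycenter s) ≤ n / (n + 1) * δ := by
  obtain ⟨t, rfl⟩ := Multiset.exists_cons_of_mem hv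
  have hδ₀ : 0 ≤ δ := dist_nonneg.trans (hδ v hv v hv)
  obtain rfl | ht := eq_or_ne t 0
  · simp only [barycenter, Multiset.cons_zero, Multiset.card_singleton, Nat.cast_one, inv_one,
      Multiset.sum_singleton, one_smul, dist_self]
    positivity
  have hbary : barycenter t ∈ Metric.closedBall v δ :=
    barycenter_mem (convex_closedBall v δ) ht fun x hx => hδ x (Multiset.mem_cons_of_mem hx) v hv
  have htn : (t.card : ℝ) ≤ n := by simpa using hcard
  rw [barycenter_cons, dist_left_lineMap, Real.norm_of_nonneg (by positivity)]
  refine mul_le_mul ?_ (Metric.mem_closedBall'.mp hbary) dist_nonneg (by positivity)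
  rw [div_le_div_iff₀ (by positivity) (by positivity)]
  linarith

/-- The simplices with `m` vertices, all in `K` and pairwise at distance at most `δ`. -/
def smallSimplices (K : Set V) (m : ℕ) (δ : ℝ) : Set (Multiset V) :=
  {s | s.card = m ∧ (∀ x ∈ s, x ∈ K) ∧ ∀ x ∈ s, ∀ y ∈ s, dist x y ≤ δ}

lemma subdivision_single_mem {K : Set V} (hK : Convex ℝ K) {m n : ℕ} (hmn : m ≤ n + 1) {δ : ℝ}
    {s : Multiset V} (hs : s ∈ smallSimplices K m δ) :
    subdivision (single s 1) ∈ supportedOn (smallSimplices K m (n / (n + 1) * δ)) := by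
  induction s using Multiset.strongInductionOn generalizing K m with
  | ih s ih =>
  obtain ⟨rfl, hsK, hδ⟩ := hs
  obtain rfl | hne := eq_or_ne s 0
  · rw [subdivision_single_zero]
    exact single_mem_supportedOn ⟨rfl, by simp, by simp⟩
  set r := n / (n + 1) * δ
  have hr : ∀ x ∈ s, dist x (barycenter s) ≤ r := fun x hx => dist_barycenter_le hmn hδ hx
  have hfacets : subdivision (boundary (single s 1)) ∈
      supportedOn (smallSimplices (K ∩ Metric.closedBall (barycenter s) r) (s.card - 1) r) := by
    refine map_mem_of_mem_supportedOn (fun t ht => ?_) (boundary_single_mem (P :=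
      {t | t < s ∧ t ∈ smallSimplices (K ∩ Metric.closedBall (barycenter s) r) (s.card - 1) δ}) ?_)
    · exact ih t ht.1 (hK.inter (convex_closedBall _ _)) (by omega) ht.2
    · rintro x t rfl
      refine ⟨Multiset.lt_cons_self t x, by simp, fun y hy => ?_, fun y hy z hz => ?_⟩
      · have hy' := Multiset.mem_cons_of_mem (b := x) hy
        exact ⟨hsK y hy', hr y hy'⟩
      · exact hδ y (Multiset.mem_cons_of_mem hy) z (Multiset.mem_cons_of_mem hz)
  rw [subdivision_single hne]
  refine map_mem_of_mem_supportedOn ?_ hfacets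
  rintro t ⟨htcard, htK, htr⟩
  rw [cone_single]
  have hcard : 0 < s.card := Multiset.card_pos.mpr hne
  have hr₀ : 0 ≤ r := let ⟨x, hx⟩ := Multiset.exists_mem_of_ne_zero hne; dist_nonneg.trans (hr x hx)
  refine single_mem_supportedOn ⟨by rw [Multiset.card_cons]; omega, ?_, ?_⟩
  · exact Multiset.forall_mem_cons.mpr ⟨barycenter_mem hK hne hsK, fun x hx => (htK x hx).1⟩
  · simp only [Multiset.forall_mem_cons, dist_self]
    exact ⟨⟨hr₀, fun x hx => Metric.mem_closedBall'.mp (htK x hx).2⟩,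
      fun x hx => ⟨(htK x hx).2, htr x hx⟩⟩

lemma subdivision_pow_mem {K : Set V} (hK : Convex ℝ K) {m n : ℕ} (hmn : m ≤ n + 1) {δ : ℝ}
    {c : SimplexChain V} (hc : c ∈ supportedOn (smallSimplices K m δ)) (N : ℕ) :
    (subdivision ^ N) c ∈ supportedOn (smallSimplices K m ((n / (n + 1)) ^ N * δ)) := by
  induction N with
  | zero => simpa using hc
  | succ N ih =>
    rw [pow_succ' subdivision, Module.End.mul_apply, pow_succ', mul_assoc]
    exact map_mem_of_mem_supportedOn (fun s hs => subdivision_single_mem hK hmn hs) ih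

lemma exists_subdivision_pow_mem {X : Set V} (hX : Bornology.IsBounded X) {δ : ℝ} (hδ : 0 < δ)
    (n : ℕ) : ∃ N, ∀ m ≤ n + 1,
      ∀ c ∈ supportedOn {s | s.card = m ∧ convexHull ℝ {x | x ∈ s} ⊆ X},
        (subdivision ^ N) c ∈ supportedOn (smallSimplices X m δ) := by
  have hlim : Filter.Tendsto (fun N => ((n : ℝ) / (n + 1)) ^ N * Metric.diam X) Filter.atTop
      (nhds 0) := by
    have hlt : (n : ℝ) / (n + 1) < 1 := (div_lt_one (by positivity)).mpr (by linarith)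
    simpa using (tendsto_pow_atTop_nhds_zero_of_lt_one (by positivity) hlt).mul_const
      (Metric.diam X)
  obtain ⟨N, hN⟩ := (hlim.eventually_lt_const hδ).exists
  refine ⟨N, fun m hm c hc => map_mem_of_mem_supportedOn ?_ hc⟩
  rintro s ⟨hcard, hsX⟩
  have hsub := subset_convexHull ℝ {x | x ∈ s}
  have hs : s ∈ smallSimplices (convexHull ℝ {x | x ∈ s}) m (Metric.diam X) :=
    ⟨hcard, fun x hx => hsub hx,
      fun x hx y hy => Metric.dist_le_diam_of_mem hX (hsX (hsub hx)) (hsX (hsub hy))⟩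
  refine Finsupp.supported_mono ?_
    (subdivision_pow_mem (convex_convexHull ℝ _) hm (single_mem_supportedOn hs) N)
  exact fun t ⟨htcard, htmem, htdist⟩ =>
    ⟨htcard, fun x hx => hsX (htmem x hx), fun x hx y hy => (htdist x hx y hy).trans hN.le⟩

end Mesh

end

end SimplexChain

open SimplexChain

section KyFan

variable {V : Type*}

lemma zero_notMem_convexHull_image {𝕜 κ : Type*} [Field 𝕜] [LinearOrder 𝕜]
    [IsStrictOrderedRing 𝕜] [AddCommGroup V] [Module 𝕜 V] {v : κ → V} {s : Set κ}
    (hv : LinearIndepOn 𝕜 v s) : (0 : V) ∉ convexHull 𝕜 (v '' s) := by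
  obtain ⟨f, hf⟩ := Module.exists_dual_forall_apply_eq_one hv
  intro h0
  have hsub : v '' s ⊆ {x | f x = 1} := Set.image_subset_iff.mpr fun i hi => hf i hi
  have h01 : f 0 = 1 := convexHull_min hsub (convex_hyperplane (𝕜 := 𝕜) f.isLinear 1) h0
  simp at h01

lemma exists_linearIndepOn_Iic {K : Type*} [DivisionRing K] [AddCommGroup V] [Module K V]
    {d : ℕ} (hd : (d + 1 : ℕ) ≤ Module.rank K V) :
    ∃ e : ℕ → V, LinearIndepOn K e (Set.Iic d) := by
  obtain ⟨s, hs, hli⟩ := le_rank_iff_exists_linearIndependent_finset.mp hd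
  refine ⟨fun k => (s.equivFinOfCardEq hs).symm (Fin.ofNat (d + 1) k), hli.comp
    (fun k : Set.Iic d => (s.equivFinOfCardEq hs).symm (Fin.ofNat (d + 1) k)) ?_⟩
  refine (Equiv.injective _).comp fun k l hkl => Subtype.ext ?_
  have hk := Set.mem_Iic.mp k.2
  have hl := Set.mem_Iic.mp l.2
  simpa [Fin.ext_iff, Nat.mod_eq_of_lt, Nat.lt_succ_of_le, hk, hl] using hkl

lemma exists_isCompact_hemisphere_mem [NormedAddCommGroup V] [NormedSpace ℝ V] {e : ℕ → V} {d : ℕ}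
    (he : LinearIndepOn ℝ e (Set.Iic d)) :
    ∃ X, IsCompact X ∧ (0 : V) ∉ X ∧ ∀ k ≤ d,
      hemisphere e k ∈ supportedOn {s | s.card = k + 1 ∧ convexHull ℝ {x | x ∈ s} ⊆ X} := by
  refine ⟨⋃ k ∈ Set.Iic d, ⋃ s ∈ (hemisphere e k).support, convexHull ℝ {x | x ∈ s},
    (Set.finite_Iic d).isCompact_biUnion fun k _ => Finset.isCompact_biUnion _ fun s _ => ?_,
    fun h0 => ?_, fun k hk s hs => ⟨(hemisphere_mem e k hs).1, ?_⟩⟩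
  · exact (Multiset.finite_toSet s).isCompact_convexHull ℝ
  · simp only [Set.mem_iUnion] at h0
    obtain ⟨k, hk, s, hs, h0⟩ := h0
    obtain ⟨-, σ, hσ⟩ := hemisphere_mem e k hs
    have hσe : LinearIndepOn ℝ (fun i => σ i • e i) (Set.Iic k) :=
      (he.mono (Set.Iic_subset_Iic.mpr hk)).group_smul fun i => σ i
    exact zero_notMem_convexHull_image hσe (convexHull_mono hσ h0)
  · exact fun x hx => Set.mem_biUnion hk (Set.mem_biUnion hs hx)

lemma exists_equivariant_labelling {ι : Type*} [Nonempty ι] [Neg V]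
    {P : V → ι × ℤˣ → Prop} (hneg : ∀ x a, P (-x) (flipSign a) ↔ P x a)
    (hfree : ∀ x a, P x a → ¬ P x (flipSign a)) :
    ∃ label : V → ι × ℤˣ, ∀ x, (∃ a, P x a) →
      P x (label x) ∧ label (-x) = flipSign (label x) := by
  classical
  let index (x : V) : ι := Classical.epsilon fun i => ∃ ε, P x (i, ε)
  have hneg' (x : V) (i : ι) (ε : ℤˣ) : P (-x) (i, -ε) ↔ P x (i, ε) := hneg x (i, ε)
  have hindex (x : V) : index (-x) = index x := by
    have hiff (i : ι) : (∃ ε, P (-x) (i, ε)) ↔ ∃ ε, P x (i, ε) :=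
      (Equiv.neg ℤˣ).exists_congr_left.trans (exists_congr fun ε => by simpa using hneg' x i ε)
    simp only [index, hiff]
  refine ⟨fun x => (index x, if P x (index x, 1) then 1 else -1), ?_⟩
  rintro x ⟨a, ha⟩
  obtain ⟨ε, hε⟩ : ∃ ε, P x (index x, ε) :=
    Classical.epsilon_spec (p := fun i => ∃ ε, P x (i, ε)) ⟨a.1, a.2, ha⟩
  by_cases h : P x (index x, 1)
  · have h' : ¬ P (-x) (index x, 1) := fun h' =>
      hfree x _ h ((hneg' x (index x) (-1)).mp (by simpa))
    simp [hindex, h, h', flipSign]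
  · have hε' : ε = -1 := (Int.units_eq_one_or ε).resolve_left fun h1 => h (h1 ▸ hε)
    subst hε'
    have h' : P (-x) (index x, 1) := by simpa using (hneg' x (index x) (-1)).mpr hε
    simp [hindex, h, h', hε, flipSign]

variable [NormedAddCommGroup V] {ι : Type*} {A : ι → Set V}

lemma exists_labelling_of_isCompact [Nonempty ι] (hopen : ∀ i, IsOpen (A i))
    (hfree : ∀ i, ∀ x ∈ A i, -x ∉ A i) {X : Set V} (hX : IsCompact X)
    (hcover : ∀ x ∈ X, ∃ i, x ∈ A i ∨ -x ∈ A i) :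
    ∃ δ > 0, ∃ label : V → ι × ℤˣ, ∀ x ∈ X, label (-x) = flipSign (label x) ∧
      ∀ y, dist x y ≤ δ → (label x).2 • y ∈ A (label x).1 := by
  obtain ⟨δ, hδ, hball⟩ := lebesgue_number_lemma_of_metric
    (c := fun a : ι × ℤˣ => {y | a.2 • y ∈ A a.1}) hX
    (fun a => (hopen a.1).preimage (continuous_const_smul a.2)) fun x hx => by
      obtain ⟨i, hi | hi⟩ := hcover x hx
      · exact Set.mem_iUnion.mpr ⟨(i, 1), by simpa using hi⟩
      · exact Set.mem_iUnion.mpr ⟨(i, -1), by simpa [Units.neg_smul] using hi⟩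
  obtain ⟨label, hlabel⟩ := exists_equivariant_labelling
    (P := fun x (a : ι × ℤˣ) => ∀ y, dist x y ≤ δ / 2 → a.2 • y ∈ A a.1)
    (fun x a => (Equiv.neg V).forall_congr fun {y} => by
      simp [flipSign, Units.neg_smul, ← dist_neg_neg x])
    fun x a h h' => by
      have hx : dist x x ≤ δ / 2 := by rw [dist_self]; positivity
      refine hfree _ _ (h x hx) ?_
      simpa [flipSign, Units.neg_smul] using h' x hx
  refine ⟨δ / 2, half_pos hδ, label, fun x hx => (hlabel x ?_).symm⟩
  obtain ⟨a, ha⟩ := hball x hx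
  exact ⟨a, fun y hy => ha (Metric.mem_ball'.mpr (hy.trans_lt (half_lt_self hδ)))⟩

variable [NormedSpace ℝ V] [LinearOrder ι]

theorem ky_fan {d : ℕ} (hd : (d + 1 : ℕ) ≤ Module.rank ℝ V)
    (hopen : ∀ i, IsOpen (A i)) (hfree : ∀ i, ∀ x ∈ A i, -x ∉ A i)
    (hcover : ∀ x ≠ 0, ∃ i, x ∈ A i ∨ -x ∈ A i) :
    ∃ a : Fin (d + 1) → ι, StrictMono a ∧ ∃ x, ∀ k, (-1 : ℤˣ) ^ (k : ℕ) • x ∈ A (a k) := by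
  obtain ⟨e, he⟩ := exists_linearIndepOn_Iic hd
  have : Nonempty ι := (hcover (e 0) (he.ne_zero (Set.mem_Iic.mpr d.zero_le))).nonempty
  obtain ⟨X, hX, h0X, hhem⟩ := exists_isCompact_hemisphere_mem he
  obtain ⟨δ, hδ, label, hlabel⟩ := exists_labelling_of_isCompact hopen hfree hX
    fun x hx => hcover x (ne_of_mem_of_not_mem hx h0X)
  obtain ⟨N, hN⟩ := exists_subdivision_pow_mem hX.isBounded hδ d
  have hsmall (k) (hk : k ≤ d) := hN (k + 1) (by omega) _ (hhem k hk)
  obtain ⟨s, hs, ε, halt⟩ := exists_isAlternating_map_of_mem_supportedOn (label := label)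
    fun k hk => Finsupp.supported_mono (fun s ⟨_, hsX, hsδ⟩ x hx => by
      obtain ⟨hneg, hA⟩ := hlabel x (hsX x hx)
      refine ⟨hneg, fun y hy hxy => hfree _ _ (hA x (hsδ x hx x hx)) ?_⟩
      simpa [hxy, flipSign, Units.neg_smul] using (hlabel y (hsX y hy)).2 x (hsδ y hy x hx))
      (hsmall k hk)
  obtain ⟨hcard, hsX, hsδ⟩ := hsmall d le_rfl hs
  obtain ⟨x, hx⟩ := Multiset.card_pos_iff_exists_mem.mp (by omega : 0 < s.card)
  obtain ⟨a, ha, hmem⟩ := halt.exists_strictMono ((Multiset.card_map _ _).trans hcard)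
  refine ⟨a, ha, ε • x, fun k => ?_⟩
  obtain ⟨y, hy, hya⟩ := Multiset.mem_map.mp (hmem k)
  simpa [hya, smul_smul] using (hlabel y (hsX y hy)).2 x (hsδ y hy x hx)

end KyFan

section Splitting

lemma neg_mem_connectedComponentIn {X : Type*} [TopologicalSpace X] [Neg X]
    [ContinuousNeg X] {D : Set X} (hsymm : ∀ x ∈ D, -x ∈ D) {x y : X}
    (hy : y ∈ connectedComponentIn D x) : -y ∈ connectedComponentIn D (-x) := by
  have hx : x ∈ D := connectedComponentIn_nonempty_iff.mp ⟨y, hy⟩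
  have hsub : Neg.neg '' D ⊆ D := Set.image_subset_iff.mpr hsymm
  exact connectedComponentIn_mono _ hsub
    (continuous_neg.continuousOn.image_connectedComponentIn_subset hx (Set.mem_image_of_mem _ hy))

lemma exists_isOpen_splitting {X : Type*} [TopologicalSpace X] [LocallyConnectedSpace X]
    [InvolutiveNeg X] [ContinuousNeg X] {D : Set X} (hopen : IsOpen D)
    (hsymm : ∀ x ∈ D, -x ∈ D) (hD : ∀ x ∈ D, -x ∉ connectedComponentIn D x) :
    ∃ A, IsOpen A ∧ (∀ x ∈ A, -x ∉ A) ∧ ∀ x ∈ D, x ∈ A ∨ -x ∈ A := by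
  let comp := connectedComponentIn D
  refine ⟨{x | x ∈ D ∧ WellOrderingRel (comp x) (comp (-x))}, ?_, ?_, fun x hx => ?_⟩
  · refine isOpen_iff_mem_nhds.mpr fun x ⟨hx, hlt⟩ => ?_
    filter_upwards [hopen.connectedComponentIn.mem_nhds (mem_connectedComponentIn hx)] with y hy
    have hy' := neg_mem_connectedComponentIn hsymm hy
    refine ⟨connectedComponentIn_subset D x hy, ?_⟩
    have heq : comp x = comp y := connectedComponentIn_eq hy
    have heq' : comp (-x) = comp (-y) := connectedComponentIn_eq hy'
    rwa [← heq, ← heq']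
  · rintro x ⟨-, hlt⟩ ⟨-, hgt⟩
    rw [neg_neg] at hgt
    exact asymm hlt hgt
  · have hne : comp x ≠ comp (-x) := fun h =>
      hD x hx (h.superset (mem_connectedComponentIn (hsymm x hx)))
    exact (trichotomous_of WellOrderingRel (comp x) (comp (-x))).imp (⟨hx, ·⟩) fun h =>
      ⟨hsymm x hx, by simpa using h.resolve_left hne⟩

end Splitting

section Sphere

variable {E : Type*} [NormedAddCommGroup E] [NormedSpace ℝ E]

lemma continuousOn_normalize : ContinuousOn (NormedSpace.normalize : E → E) {0}ᶜ :=
  (continuousOn_id.norm.inv₀ fun _ hx => norm_ne_zero_iff.mpr hx).smul continuousOn_id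

/-- The open cone spanned by a subset `C` of the unit sphere. -/
def radialCone (C : Set E) : Set E :=
  {0}ᶜ ∩ NormedSpace.normalize ⁻¹' C

lemma isOpen_radialCone {C : Set E} (hC : ∃ U, IsOpen U ∧ C = U ∩ Metric.sphere 0 1) :
    IsOpen (radialCone C) := by
  obtain ⟨U, hU, rfl⟩ := hC
  have hcone : radialCone (U ∩ Metric.sphere 0 1) = {0}ᶜ ∩ NormedSpace.normalize ⁻¹' U := by
    ext x
    simp +contextual [radialCone]
  exact hcone ▸ continuousOn_normalize.isOpen_inter_preimage isOpen_compl_singleton hU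

lemma exists_isOpen_splitting_radialCone {C : Set E}
    (hopen : ∃ U, IsOpen U ∧ C = U ∩ Metric.sphere 0 1) (hsymm : ∀ x ∈ C, -x ∈ C)
    (hC : ∀ x ∈ C, -x ∉ connectedComponentIn C x) :
    ∃ A, IsOpen A ∧ (∀ x ∈ A, -x ∉ A) ∧ ∀ x ∈ radialCone C, x ∈ A ∨ -x ∈ A := by
  refine exists_isOpen_splitting (isOpen_radialCone hopen) (fun x ⟨hx, hxC⟩ => ?_)
    fun x hx hcomp => hC _ hx.2 ?_
  · exact ⟨neg_ne_zero.mpr hx, by simpa using hsymm _ hxC⟩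
  · have hcont : ContinuousOn NormedSpace.normalize (radialCone C) :=
      continuousOn_normalize.mono Set.inter_subset_left
    have himage := hcont.image_connectedComponentIn_subset hx (Set.mem_image_of_mem _ hcomp)
    rw [NormedSpace.normalize_neg] at himage
    exact connectedComponentIn_mono _ (Set.image_subset_iff.mpr fun y hy => hy.2) himage

theorem signed_borsuk_ulam_open_general {ι : Type*} [Finite ι]
    (hE : (Nat.card ι : Cardinal) < Module.rank ℝ E) (C : ι → Set E)
    (hopen : ∀ i, ∃ U : Set E, IsOpen U ∧ C i = U ∩ Metric.sphere 0 1)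
    (hsymm : ∀ i, ∀ x ∈ C i, -x ∈ C i) (hcover : Metric.sphere 0 1 ⊆ ⋃ i, C i) :
    ∃ i, ∃ x ∈ C i, -x ∈ connectedComponentIn (C i) x := by
  by_contra! hC
  choose A hA hfree hsplit using fun i =>
    exists_isOpen_splitting_radialCone (hopen i) (hsymm i) (hC i)
  classical
  let := linearOrderOfSTO (WellOrderingRel (α := ι))
  obtain ⟨a, ha, -⟩ := ky_fan (d := Nat.card ι) (by simpa using Order.succ_le_of_lt hE) hA hfree
    fun x hx => by
      have hmem : NormedSpace.normalize x ∈ Metric.sphere (0 : E) 1 := by simp [hx]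
      obtain ⟨i, hi⟩ := Set.mem_iUnion.mp (hcover hmem)
      exact ⟨i, hsplit i x ⟨hx, hi⟩⟩
  simpa using Nat.card_le_card_of_injective a ha.injective

end Sphere

/-- signed Borsuk–Ulam, open form: for every cover of the sphere `S^d` by `d`
antipodally symmetric sets `C_1,…,C_d`, each open in `S^d`, some `C_i` contains a pair of
antipodal points lying in the same connected component of `C_i`. -/
theorem signed_borsuk_ulam_open (d : ℕ)
    (C : Fin d → Set (EuclideanSpace ℝ (Fin (d + 1))))
    (hsub : ∀ i, C i ⊆ Metric.sphere (0 : EuclideanSpace ℝ (Fin (d + 1))) 1)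
    (hopen : ∀ i, ∃ U : Set (EuclideanSpace ℝ (Fin (d + 1))), IsOpen U ∧
        C i = U ∩ Metric.sphere (0 : EuclideanSpace ℝ (Fin (d + 1))) 1)
    (hsymm : ∀ i, ∀ x ∈ C i, -x ∈ C i)
    (hcover : Metric.sphere (0 : EuclideanSpace ℝ (Fin (d + 1))) 1 ⊆ ⋃ i, C i) :
    ∃ i, ∃ x ∈ C i, -x ∈ connectedComponentIn (C i) x :=
  signed_borsuk_ulam_open_general (by simp [rank_eq_card_basis (PiLp.basisFun 2 ℝ _)])
    C hopen hsymm hcover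
end

section
/- For every cover of S^d by d antipodally symmetric closed sets F_1,…,F_d, at least one F_i contains a pair of antipodal points in the same connected component of F_i. (Signed Borsuk–Ulam, closed form) -/
/-!
If no point of the compact symmetric set `F i` shares its component with its antipode, then `F i` is
the disjoint union of a closed set and its antipode, so some odd continuous function does not vanish
on `F i`. The map with these `d` coordinates has no zero on the sphere, against Borsuk–Ulam.

Borsuk–Ulam is proved through Tucker's lemma, with mod-2 cochains. Take labels `±1, …, ±n` that are
odd on a symmetric subdivision of the boundary of a cross-polytope and never opposite on a simplex.
The alternating cochains `α₊` and `α₋` of Ky Fan satisfy `δα₊ = α₊ + α₋`, and the antipodal map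
exchanges them. Pairing antipodal facets, the sum of `α₊` over the boundary of a cross-polytope is
therefore the same in each dimension, so it is the value `1` of `α₊` on the empty simplex. With more
than `n` vertices in each facet the sum vanishes instead, since a simplex with alternating labels
has distinct label indices.
-/

namespace SignedBorsukUlam

section Coboundary

variable {α β : Type*} [DecidableEq α] [DecidableEq β]

/-- The mod-2 simplicial coboundary. A simplex is encoded as the multiset of its vertices (repeated
vertices allowed, and the empty simplex included, so this is the augmented complex), and a cochain
as a function on all multisets. -/
def coboundary (h : Multiset α → ZMod 2) (M : Multiset α) : ZMod 2 :=
  (M.map fun a => h (M.erase a)).sum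

@[simp]
lemma coboundary_zero (h : Multiset α → ZMod 2) : coboundary h 0 = 0 := by
  simp [coboundary]

lemma coboundary_cons (h : Multiset α → ZMod 2) (a : α) (M : Multiset α) :
    coboundary h (a ::ₘ M) = h M + coboundary (fun L => h (a ::ₘ L)) M := by
  rw [coboundary, coboundary, Multiset.map_cons, Multiset.sum_cons, Multiset.erase_cons_head]
  congr 2
  refine Multiset.map_congr rfl fun b hb => ?_
  rw [← Multiset.erase_cons_tail_of_mem hb]

lemma coboundary_congr {h h' : Multiset α → ZMod 2} {M : Multiset α}
    (H : ∀ L ≤ M, h L = h' L) : coboundary h M = coboundary h' M :=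
  congrArg _ <| Multiset.map_congr rfl fun a _ => H _ (Multiset.erase_le a M)

lemma coboundary_add (h h' : Multiset α → ZMod 2) (M : Multiset α) :
    coboundary (fun L => h L + h' L) M = coboundary h M + coboundary h' M :=
  Multiset.sum_map_add

lemma coboundary_comp_map (f : α → β) (h : Multiset β → ZMod 2) (M : Multiset α) :
    coboundary (fun L => h (L.map f)) M = coboundary h (M.map f) := by
  rw [coboundary, coboundary, Multiset.map_map]
  refine congrArg _ <| Multiset.map_congr rfl fun a ha => ?_
  rw [Function.comp_apply, Multiset.map_erase_of_mem f M ha]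

lemma coboundary_coboundary (h : Multiset α → ZMod 2) (M : Multiset α) :
    coboundary (coboundary h) M = 0 := by
  induction M using Multiset.induction generalizing h with
  | empty => exact coboundary_zero _
  | cons a M ih =>
    simp only [coboundary_cons, coboundary_add, ih, add_zero, CharTwo.add_self_eq_zero]

end Coboundary

section Alternating

variable {α : Type*} [LinearOrder α]

lemma multiset_induction_on_min {p : Multiset α → Prop} (M : Multiset α) (zero : p 0)
    (cons : ∀ a M, (∀ b ∈ M, a ≤ b) → p M → p (a ::ₘ M)) : p M := by
  suffices ∀ l : List α, l.Pairwise (· ≤ ·) → p l by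
    simpa only [Multiset.sort_eq] using this (M.sort (· ≤ ·)) (M.pairwise_sort _)
  intro l hl
  induction hl with
  | nil => exact zero
  | cons ha _ ih => exact cons _ _ ha ih

/-- Ky Fan's alternating cochain: the indicator of the simplices whose vertices, in increasing
order, have alternating signs beginning with `b`. -/
def alternatingCochain (sign : α → Bool) (b : Bool) (M : Multiset α) : ZMod 2 :=
  if ((!b) :: (M.sort (· ≤ ·)).map sign).IsChain (· ≠ ·) then 1 else 0

variable {sign : α → Bool} {b : Bool}

@[simp]
lemma alternatingCochain_zero : alternatingCochain sign b 0 = 1 := by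
  simp [alternatingCochain]

lemma alternatingCochain_cons {a : α} {M : Multiset α} (ha : ∀ x ∈ M, a ≤ x) :
    alternatingCochain sign b (a ::ₘ M) =
      if sign a = b then alternatingCochain sign (!b) M else 0 := by
  have hchain : ((!b) :: ((a ::ₘ M).sort (· ≤ ·)).map sign).IsChain (· ≠ ·) ↔
      sign a = b ∧ (b :: (M.sort (· ≤ ·)).map sign).IsChain (· ≠ ·) := by
    rw [Multiset.sort_cons _ _ _ ha, List.map_cons, List.isChain_cons_cons, ne_comm,
      ne_eq, Bool.not_eq_not]
    exact and_congr_right fun hs => by rw [hs]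
  simp only [alternatingCochain, hchain, Bool.not_not, ite_and]

lemma coboundary_alternatingCochain (M : Multiset α) :
    coboundary (alternatingCochain sign b) M =
      alternatingCochain sign b M + alternatingCochain sign (!b) M := by
  induction M using multiset_induction_on_min generalizing b with
  | zero => simp [CharTwo.add_self_eq_zero]
  | cons a M ha ih =>
    have hcons : coboundary (fun L => alternatingCochain sign b (a ::ₘ L)) M =
        coboundary (fun L => if sign a = b then alternatingCochain sign (!b) L else 0) M :=
      coboundary_congr fun L hL =>
        alternatingCochain_cons fun x hx => ha x (Multiset.mem_of_le hL hx)
    rw [coboundary_cons, hcons, alternatingCochain_cons ha, alternatingCochain_cons ha]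
    by_cases hs : sign a = b
    · simp only [hs, if_true, ih, Bool.not_not, Bool.eq_not_self, if_false, add_zero]
      rw [add_left_comm, CharTwo.add_self_eq_zero, add_zero]
    · have hs' : sign a = !b := Bool.eq_not.2 hs
      simp [hs', coboundary]

lemma alternatingCochain_map {β : Type*} [LinearOrder β] {sign' : β → Bool} {f : α → β}
    {M : Multiset α} (hmono : ∀ x ∈ M, ∀ y ∈ M, x ≤ y ↔ f x ≤ f y)
    (hsign : ∀ x ∈ M, sign' (f x) = !sign x) :
    alternatingCochain sign' b (M.map f) = alternatingCochain sign (!b) M := by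
  have hmap : (!b) :: ((M.map f).sort (· ≤ ·)).map sign' =
      ((!(!b)) :: (M.sort (· ≤ ·)).map sign).map not := by
    rw [← Multiset.map_sort _ _ _ _ hmono, List.map_cons, List.map_map, List.map_map, Bool.not_not]
    exact congrArg _ (List.map_congr_left fun x hx => hsign x ((Multiset.mem_sort _).1 hx))
  simp only [alternatingCochain, hmap, List.isChain_map, ne_eq, Bool.not_eq_eq_eq_not,
    Bool.not_not]

end Alternating

section Labels

variable {ι : Type*}

/-- The label opposite to `p`, labels being pairs (index, sign). -/
def opposite (p : ι ×ₗ Bool) : ι ×ₗ Bool :=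
  toLex ((ofLex p).1, !(ofLex p).2)

lemma eq_opposite_iff {p q : ι ×ₗ Bool} :
    q = opposite p ↔ (ofLex p).1 = (ofLex q).1 ∧ (ofLex p).2 ≠ (ofLex q).2 := by
  rw [← ofLex_inj, Prod.ext_iff, opposite, ofLex_toLex, eq_comm, ne_comm, ne_eq, Bool.eq_not]

variable [LinearOrder ι]

lemma alternatingCochain_map_opposite {M : Multiset (ι ×ₗ Bool)} {b : Bool}
    (hM : ∀ p ∈ M, ∀ q ∈ M, q ≠ opposite p) :
    alternatingCochain (fun p => (ofLex p).2) b (M.map opposite) =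
      alternatingCochain (fun p => (ofLex p).2) (!b) M := by
  refine alternatingCochain_map (fun p hp q hq => ?_) fun p _ => rfl
  rw [Prod.Lex.le_iff, Prod.Lex.le_iff]
  refine or_congr_right (and_congr_right fun hidx => ?_)
  have hsign : (ofLex p).2 = (ofLex q).2 := by
    by_contra hne
    exact hM p hp q hq (eq_opposite_iff.2 ⟨hidx, hne⟩)
  simp [opposite, hsign]

lemma card_le_of_alternatingCochain_ne_zero [Fintype ι] {M : Multiset (ι ×ₗ Bool)} {b : Bool}
    (hM : ∀ p ∈ M, ∀ q ∈ M, q ≠ opposite p)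
    (hb : alternatingCochain (fun p => (ofLex p).2) b M ≠ 0) : M.card ≤ Fintype.card ι := by
  have halt : (M.sort (· ≤ ·)).IsChain fun p q => (ofLex p).2 ≠ (ofLex q).2 := by
    by_contra h
    exact hb (if_neg fun h' => h ((List.isChain_map _).1 h'.tail))
  have hlt : (M.sort (· ≤ ·)).IsChain fun p q => (ofLex p).1 < (ofLex q).1 := by
    have hle := (M.pairwise_sort (· ≤ ·)).isChain
    rw [List.isChain_iff_getElem] at halt hle ⊢
    intro n hn
    have hmem (k : ℕ) (hk : k < (M.sort (· ≤ ·)).length) : (M.sort (· ≤ ·))[k] ∈ M :=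
      (Multiset.mem_sort _).1 (List.getElem_mem hk)
    refine (Prod.Lex.le_iff.1 (hle n hn)).resolve_right fun h => ?_
    exact hM _ (hmem _ _) _ (hmem _ _) (eq_opposite_iff.2 ⟨h.1, halt n hn⟩)
  have hnodup : ((M.sort (· ≤ ·)).map fun p => (ofLex p).1).Nodup :=
    ((List.isChain_map _).2 hlt).pairwise.imp ne_of_lt
  simpa using hnodup.length_le_card

end Labels

section Subdivision

variable {E : Type*} [AddCommGroup E] [Module ℝ E]

/-- The barycenter of the vertices of a simplex (`0` for the empty simplex). -/
noncomputable def barycenter (M : Multiset E) : E :=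
  (M.card : ℝ)⁻¹ • M.sum

lemma barycenter_map_neg (M : Multiset E) : barycenter (M.map Neg.neg) = -barycenter M := by
  rw [barycenter, barycenter, Multiset.card_map, Multiset.sum_map_neg, Multiset.map_id',
    smul_neg]

lemma barycenter_mem_convexHull {M : Multiset E} (hM : M ≠ 0) :
    barycenter M ∈ convexHull ℝ {y | y ∈ M} := by
  classical
  have hcard : ∑ x ∈ M.toFinset, (M.count x : ℝ) = M.card := by
    exact_mod_cast M.toFinset_sum_count_eq
  have hcenter : barycenter M = M.toFinset.centerMass (fun x => (M.count x : ℝ)) id := by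
    simp only [barycenter, Finset.centerMass, hcard, id_eq, Nat.cast_smul_eq_nsmul,
      ← Finset.sum_multiset_count]
  rw [hcenter]
  refine Finset.centerMass_mem_convexHull _ (fun x _ => Nat.cast_nonneg _) ?_
    fun x hx => Multiset.mem_toFinset.1 hx
  rw [hcard]
  exact_mod_cast Multiset.card_pos.2 hM

variable [DecidableEq E]

/-- A way of subdividing each simplex into smaller simplices spanned by points of its convex hull,
which is compatible with mod-2 boundaries and with the antipodal map. `T M` lists the pieces of `M`
of full dimension. -/
structure IsSubdivision (T : Multiset E → Multiset (Multiset E)) : Prop where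
  map_zero : T 0 = {0}
  map_neg (M : Multiset E) : T (M.map Neg.neg) = (T M).map (Multiset.map Neg.neg)
  card_eq {M L : Multiset E} (hL : L ∈ T M) : L.card = M.card
  mem_convexHull {M L : Multiset E} (hL : L ∈ T M) {x : E} (hx : x ∈ L) :
    x ∈ convexHull ℝ {y | y ∈ M}
  sum_coboundary (h : Multiset E → ZMod 2) (M : Multiset E) :
    ((T M).map (coboundary h)).sum = coboundary (fun F => ((T F).map h).sum) M

lemma IsSubdivision.singleton : IsSubdivision (fun M : Multiset E => {M}) where
  map_zero := rfl
  map_neg M := (Multiset.map_singleton _ M).symm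
  card_eq hL := congrArg _ (Multiset.mem_singleton.1 hL)
  mem_convexHull hL _ hx := subset_convexHull ℝ _ (Multiset.mem_singleton.1 hL ▸ hx)
  sum_coboundary h M := by simp only [Multiset.map_singleton, Multiset.sum_singleton]

lemma IsSubdivision.bind {S T : Multiset E → Multiset (Multiset E)} (hS : IsSubdivision S)
    (hT : IsSubdivision T) : IsSubdivision fun M => (S M).bind T where
  map_zero := by simp [hS.map_zero, hT.map_zero]
  map_neg M := by simp [hS.map_neg, hT.map_neg, Multiset.bind_map, Multiset.map_bind]
  card_eq hL := by
    obtain ⟨F, hF, hL⟩ := Multiset.mem_bind.1 hL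
    rw [hT.card_eq hL, hS.card_eq hF]
  mem_convexHull hL x hx := by
    obtain ⟨F, hF, hL⟩ := Multiset.mem_bind.1 hL
    exact convexHull_min (fun y hy => hS.mem_convexHull hF hy) (convex_convexHull ℝ _)
      (hT.mem_convexHull hL hx)
  sum_coboundary h M := by
    simp only [Multiset.map_bind, Multiset.sum_bind, hT.sum_coboundary, hS.sum_coboundary]

/-- The simplices of the barycentric subdivision of a simplex: the cones from its barycenter over
the subdivisions of its facets. -/
noncomputable def barycentricSubdivision (M : Multiset E) : Multiset (Multiset E) :=
  if M = 0 then {0} else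
    M.attach.bind fun a => (barycentricSubdivision (M.erase a)).map (barycenter M ::ₘ ·)
  termination_by M.card
  decreasing_by exact Multiset.card_erase_lt_of_mem a.2

lemma barycentricSubdivision_zero : barycentricSubdivision (0 : Multiset E) = {0} := by
  rw [barycentricSubdivision, if_pos rfl]

lemma barycentricSubdivision_of_ne_zero {M : Multiset E} (hM : M ≠ 0) :
    barycentricSubdivision M =
      M.bind fun a => (barycentricSubdivision (M.erase a)).map (barycenter M ::ₘ ·) := by
  rw [barycentricSubdivision, if_neg hM]
  exact M.attach_bind_coe fun a => (barycentricSubdivision (M.erase a)).map (barycenter M ::ₘ ·)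

lemma sum_map_barycentricSubdivision {M : Multiset E} (hM : M ≠ 0) (h : Multiset E → ZMod 2) :
    ((barycentricSubdivision M).map h).sum =
      coboundary (fun F => ((barycentricSubdivision F).map fun L => h (barycenter M ::ₘ L)).sum)
        M := by
  simp only [barycentricSubdivision_of_ne_zero hM, Multiset.map_bind, Multiset.sum_bind,
    Multiset.map_map, Function.comp_apply, coboundary]

lemma mem_barycentricSubdivision {M L : Multiset E} (hM : M ≠ 0) :
    L ∈ barycentricSubdivision M ↔
      ∃ a ∈ M, ∃ F ∈ barycentricSubdivision (M.erase a), barycenter M ::ₘ F = L := by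
  simp only [barycentricSubdivision_of_ne_zero hM, Multiset.mem_bind, Multiset.mem_map]

lemma barycentricSubdivision_map_neg (M : Multiset E) :
    barycentricSubdivision (M.map Neg.neg) =
      (barycentricSubdivision M).map (Multiset.map Neg.neg) := by
  induction M using Multiset.strongInductionOn with | _ M ih
  rcases eq_or_ne M 0 with rfl | hM
  · simp [barycentricSubdivision_zero]
  · rw [barycentricSubdivision_of_ne_zero hM, barycentricSubdivision_of_ne_zero (by simpa using hM),
      Multiset.bind_map, Multiset.map_bind]
    refine Multiset.bind_congr fun a ha => ?_
    rw [← Multiset.map_erase_of_mem _ _ ha, ih _ (Multiset.erase_lt.2 ha), barycenter_map_neg,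
      Multiset.map_map, Multiset.map_map]
    simp only [Function.comp_def, Multiset.map_cons]

lemma card_of_mem_barycentricSubdivision {M L : Multiset E} (hL : L ∈ barycentricSubdivision M) :
    L.card = M.card := by
  induction M using Multiset.strongInductionOn generalizing L with | _ M ih
  rcases eq_or_ne M 0 with rfl | hM
  · rw [barycentricSubdivision_zero, Multiset.mem_singleton] at hL
    rw [hL]
  · obtain ⟨a, ha, F, hF, rfl⟩ := (mem_barycentricSubdivision hM).1 hL
    rw [Multiset.card_cons, ih _ (Multiset.erase_lt.2 ha) hF, Multiset.card_erase_add_one ha]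

lemma mem_convexHull_of_mem_barycentricSubdivision {M L : Multiset E}
    (hL : L ∈ barycentricSubdivision M) {x : E} (hx : x ∈ L) : x ∈ convexHull ℝ {y | y ∈ M} := by
  induction M using Multiset.strongInductionOn generalizing L with | _ M ih
  rcases eq_or_ne M 0 with rfl | hM
  · rw [barycentricSubdivision_zero, Multiset.mem_singleton] at hL
    exact absurd hx (hL ▸ Multiset.notMem_zero x)
  obtain ⟨a, ha, F, hF, rfl⟩ := (mem_barycentricSubdivision hM).1 hL
  rcases Multiset.mem_cons.1 hx with rfl | hx
  · exact barycenter_mem_convexHull hM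
  · exact convexHull_mono (fun y => Multiset.mem_of_mem_erase)
      (ih _ (Multiset.erase_lt.2 ha) hF hx)

/- With `b` the barycenter of `M`, subdivision takes the boundary of a cone `b * F` to `F` plus the
cone over the boundary of `F`; summed over the facets `F` of `M`, the latter parts cancel because
the boundary of a boundary vanishes. -/
lemma sum_coboundary_barycentricSubdivision (h : Multiset E → ZMod 2) (M : Multiset E) :
    ((barycentricSubdivision M).map (coboundary h)).sum =
      coboundary (fun F => ((barycentricSubdivision F).map h).sum) M := by
  induction M using Multiset.strongInductionOn generalizing h with | _ M ih
  rcases eq_or_ne M 0 with rfl | hM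
  · simp [barycentricSubdivision_zero]
  have hfacet : ∀ a ∈ M, ((barycentricSubdivision (M.erase a)).map
        (coboundary fun L => h (barycenter M ::ₘ L))).sum =
      coboundary (fun F => ((barycentricSubdivision F).map
        fun L => h (barycenter M ::ₘ L)).sum) (M.erase a) :=
    fun a ha => ih _ (Multiset.erase_lt.2 ha) _
  simp only [sum_map_barycentricSubdivision hM, coboundary_cons, Multiset.sum_map_add,
    coboundary_add, add_eq_left]
  rw [← coboundary_coboundary (fun F => ((barycentricSubdivision F).map
        fun L => h (barycenter M ::ₘ L)).sum) M]
  exact congrArg _ (Multiset.map_congr rfl hfacet)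

lemma IsSubdivision.barycentric : IsSubdivision (barycentricSubdivision (E := E)) where
  map_zero := barycentricSubdivision_zero
  map_neg := barycentricSubdivision_map_neg
  card_eq := card_of_mem_barycentricSubdivision
  mem_convexHull := mem_convexHull_of_mem_barycentricSubdivision
  sum_coboundary := sum_coboundary_barycentricSubdivision

end Subdivision

section Mesh

variable {E : Type*} [NormedAddCommGroup E] [NormedSpace ℝ E]

lemma dist_barycenter_le {M : Multiset E} {n : ℕ} {δ : ℝ} (hcard : M.card ≤ n + 1)
    (hδ : ∀ x ∈ M, ∀ y ∈ M, dist x y ≤ δ) {x : E} (hx : x ∈ convexHull ℝ {y | y ∈ M}) :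
    dist x (barycenter M) ≤ n / (n + 1) * δ := by
  refine convexHull_min (fun v hv => ?_) (convex_closedBall (barycenter M) (n / (n + 1) * δ)) hx
  obtain ⟨F, rfl⟩ := Multiset.exists_cons_of_mem hv
  have hδ0 : 0 ≤ δ := dist_nonneg.trans (hδ v hv v hv)
  have hF : (F.card : ℝ) ≤ n := by
    rw [Multiset.card_cons] at hcard
    exact_mod_cast Nat.le_of_succ_le_succ hcard
  have hsub : v - barycenter (v ::ₘ F) =
      ((F.card : ℝ) + 1)⁻¹ • (F.map fun w => v - w).sum := by
    rw [barycenter, Multiset.sum_map_sub, Multiset.map_const', Multiset.sum_replicate,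
      Multiset.map_id', eq_inv_smul_iff₀ (by positivity), smul_sub, Multiset.card_cons,
      Multiset.sum_cons]
    push_cast
    rw [smul_inv_smul₀ (by positivity)]
    module
  have hsum : ‖(F.map fun w => v - w).sum‖ ≤ F.card * δ := by
    refine (norm_multiset_sum_le _).trans ?_
    rw [Multiset.map_map, ← nsmul_eq_mul, ← Multiset.card_map (fun w => ‖v - w‖) F]
    refine Multiset.sum_le_card_nsmul _ _ fun r hr => ?_
    obtain ⟨w, hw, rfl⟩ := Multiset.mem_map.1 hr
    exact (dist_eq_norm v w).symm.trans_le (hδ v hv w (Multiset.mem_cons_of_mem hw))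
  rw [Metric.mem_closedBall, dist_eq_norm, hsub, norm_smul, norm_inv,
    Real.norm_of_nonneg (by positivity)]
  calc ((F.card : ℝ) + 1)⁻¹ * ‖(F.map fun w => v - w).sum‖
      ≤ ((F.card : ℝ) + 1)⁻¹ * (F.card * δ) := by gcongr
    _ = F.card / (F.card + 1) * δ := by ring
    _ ≤ n / (n + 1) * δ := by
      gcongr ?_ * δ
      rw [div_le_div_iff₀ (by positivity) (by positivity)]
      linarith

variable [DecidableEq E]

lemma dist_le_of_mem_barycentricSubdivision {M L : Multiset E} {n : ℕ} {δ : ℝ}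
    (hL : L ∈ barycentricSubdivision M) (hcard : M.card ≤ n + 1)
    (hδ : ∀ x ∈ M, ∀ y ∈ M, dist x y ≤ δ) : ∀ x ∈ L, ∀ y ∈ L, dist x y ≤ n / (n + 1) * δ := by
  induction M using Multiset.strongInductionOn generalizing L with | _ M ih
  rcases eq_or_ne M 0 with rfl | hM
  · rw [barycentricSubdivision_zero, Multiset.mem_singleton] at hL
    simp [hL]
  obtain ⟨a, ha, F, hF, rfl⟩ := (mem_barycentricSubdivision hM).1 hL
  have hbary : ∀ x ∈ barycenter M ::ₘ F, dist x (barycenter M) ≤ n / (n + 1) * δ :=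
    fun x hx => dist_barycenter_le hcard hδ (mem_convexHull_of_mem_barycentricSubdivision hL hx)
  have hfacet : ∀ x ∈ F, ∀ y ∈ F, dist x y ≤ n / (n + 1) * δ :=
    ih _ (Multiset.erase_lt.2 ha) hF (Multiset.card_erase_le.trans hcard)
      fun x hx y hy => hδ x (Multiset.mem_of_mem_erase hx) y (Multiset.mem_of_mem_erase hy)
  intro x hx y hy
  rcases Multiset.mem_cons.1 hx with rfl | hxF
  · exact dist_comm y _ ▸ hbary y hy
  rcases Multiset.mem_cons.1 hy with rfl | hyF
  exacts [hbary x hx, hfacet x hxF y hyF]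

lemma exists_isSubdivision_dist_le (n N : ℕ) (δ : ℝ) :
    ∃ T : Multiset E → Multiset (Multiset E), IsSubdivision T ∧
      ∀ M : Multiset E, M.card ≤ n + 1 → (∀ x ∈ M, ∀ y ∈ M, dist x y ≤ δ) →
        ∀ L ∈ T M, ∀ x ∈ L, ∀ y ∈ L, dist x y ≤ (n / (n + 1)) ^ N * δ := by
  induction N with
  | zero =>
    refine ⟨_, IsSubdivision.singleton, fun M _ hM L hL => ?_⟩
    rwa [Multiset.mem_singleton.1 hL, pow_zero, one_mul]
  | succ N ih =>
    obtain ⟨T, hT, hmesh⟩ := ih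
    refine ⟨_, hT.bind .barycentric, fun M hcard hM L hL => ?_⟩
    obtain ⟨F, hF, hL⟩ := Multiset.mem_bind.1 hL
    rw [pow_succ', mul_assoc]
    exact dist_le_of_mem_barycentricSubdivision hL ((hT.card_eq hF).trans_le hcard)
      (hmesh M hcard hM F hF)

lemma exists_isSubdivision_dist_lt (n : ℕ) (δ : ℝ) {ε : ℝ} (hε : 0 < ε) :
    ∃ T : Multiset E → Multiset (Multiset E), IsSubdivision T ∧
      ∀ M : Multiset E, M.card ≤ n + 1 → (∀ x ∈ M, ∀ y ∈ M, dist x y ≤ δ) →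
        ∀ L ∈ T M, ∀ x ∈ L, ∀ y ∈ L, dist x y < ε := by
  have hratio : (n / (n + 1) : ℝ) < 1 := (div_lt_one (by positivity)).2 (lt_add_one _)
  have hlim : Filter.Tendsto (fun N => (n / (n + 1) : ℝ) ^ N * δ) Filter.atTop (nhds 0) := by
    simpa using (tendsto_pow_atTop_nhds_zero_of_lt_one (by positivity) hratio).mul_const δ
  obtain ⟨N, hN⟩ := (hlim.eventually_lt_const hε).exists
  obtain ⟨T, hT, hmesh⟩ := exists_isSubdivision_dist_le (E := E) n N δ
  exact ⟨T, hT, fun M hcard hM L hL x hx y hy => (hmesh M hcard hM L hL x hx y hy).trans_lt hN⟩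

end Mesh

section CrossPolytope

variable {E : Type*} [AddCommGroup E]

/-- The facets of the boundary of the cross-polytope with vertices `v` and `-v` for `v` in the
given list: a facet contains one vertex of each such pair. The vertices need not be independent. -/
def crossPolytopeFacets : List E → Multiset (Multiset E)
  | [] => {0}
  | v :: l => (crossPolytopeFacets l).map (v ::ₘ ·) + (crossPolytopeFacets l).map (-v ::ₘ ·)

lemma mem_crossPolytopeFacets_cons {v : E} {l : List E} {N : Multiset E} :
    N ∈ crossPolytopeFacets (v :: l) ↔
      ∃ L ∈ crossPolytopeFacets l, v ::ₘ L = N ∨ -v ::ₘ L = N := by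
  simp only [crossPolytopeFacets, Multiset.mem_add, Multiset.mem_map, ← exists_or, ← and_or_left]

lemma coe_mem_crossPolytopeFacets (l : List E) : (l : Multiset E) ∈ crossPolytopeFacets l := by
  induction l with
  | nil => exact Multiset.mem_singleton_self 0
  | cons v l ih => exact mem_crossPolytopeFacets_cons.2 ⟨l, ih, .inl (Multiset.cons_coe v l)⟩

lemma card_of_mem_crossPolytopeFacets {l : List E} {N : Multiset E}
    (hN : N ∈ crossPolytopeFacets l) : N.card = l.length := by
  induction l generalizing N with
  | nil => rw [Multiset.mem_singleton.1 hN, Multiset.card_zero, List.length_nil]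
  | cons v l ih =>
    obtain ⟨L, hL, rfl | rfl⟩ := mem_crossPolytopeFacets_cons.1 hN <;>
      rw [Multiset.card_cons, ih hL, List.length_cons]

lemma exists_eq_map_smul_of_mem_crossPolytopeFacets {κ : Type*} {v : κ → E} {l : List κ}
    (hl : l.Nodup) {N : Multiset E} (hN : N ∈ crossPolytopeFacets (l.map v)) :
    ∃ s : κ → ℤˣ, N = ↑(l.map fun i => s i • v i) := by
  classical
  induction l generalizing N with
  | nil => exact ⟨1, Multiset.mem_singleton.1 hN⟩
  | cons i l ih =>
    obtain ⟨hi, hl⟩ := List.nodup_cons.1 hl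
    obtain ⟨L, hL, hN⟩ := mem_crossPolytopeFacets_cons.1 hN
    obtain ⟨s, rfl⟩ := ih hl hL
    have hupdate (u : ℤˣ) : u • v i ::ₘ ↑(l.map fun j => s j • v j) =
        (((i :: l).map fun j => Function.update s i u j • v j : List E) : Multiset E) := by
      rw [List.map_cons, ← Multiset.cons_coe, Function.update_self]
      refine congrArg _ (congrArg _ <| List.map_congr_left fun j hj => ?_)
      rw [Function.update_of_ne (ne_of_mem_of_not_mem hj hi)]
    rcases hN with rfl | rfl
    · exact ⟨_, by rw [← hupdate 1, one_smul]⟩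
    · exact ⟨_, by rw [← hupdate (-1), Units.neg_smul, one_smul]⟩

lemma crossPolytopeFacets_map_neg (l : List E) :
    (crossPolytopeFacets l).map (Multiset.map Neg.neg) = crossPolytopeFacets l := by
  induction l with
  | nil => rfl
  | cons v l ih =>
    have hcone (w : E) : ((crossPolytopeFacets l).map (w ::ₘ ·)).map (Multiset.map Neg.neg) =
        (crossPolytopeFacets l).map (-w ::ₘ ·) := by
      conv_rhs => rw [← ih]
      simp only [Multiset.map_map, Function.comp_apply, Multiset.map_cons]
    rw [crossPolytopeFacets, Multiset.map_add, hcone, hcone, neg_neg, add_comm]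

variable [DecidableEq E]

lemma sum_coboundary_crossPolytopeFacets (h : Multiset E → ZMod 2) (l : List E) :
    ((crossPolytopeFacets l).map (coboundary h)).sum = 0 := by
  induction l generalizing h with
  | nil => simp [crossPolytopeFacets]
  | cons v l ih =>
    simp only [crossPolytopeFacets, Multiset.map_add, Multiset.map_map, Function.comp_apply,
      Multiset.sum_add, coboundary_cons, Multiset.sum_map_add, ih, add_zero,
      CharTwo.add_self_eq_zero]

/- In the inductive step, an antipodal pair of facets `v * L`, `-v * -L` contributes
`g (v * L) + g' (v * L)`, which is the coboundary of `g`; this lowers the dimension by one. -/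
lemma sum_crossPolytopeFacets_eq {g g' : Multiset E → ZMod 2}
    (hg : ∀ M, coboundary g M = g M + g' M) {l : List E}
    (hneg : ∀ N ∈ crossPolytopeFacets l, ∀ M ≤ N, g (M.map Neg.neg) = g' M) :
    ((crossPolytopeFacets l).map g).sum = g 0 := by
  induction l with
  | nil => simp [crossPolytopeFacets]
  | cons v l ih =>
    have hantipode : ((crossPolytopeFacets l).map fun L => g (-v ::ₘ L)).sum =
        ((crossPolytopeFacets l).map fun L => g' (v ::ₘ L)).sum := by
      conv_lhs => rw [← crossPolytopeFacets_map_neg, Multiset.map_map]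
      refine congrArg _ (Multiset.map_congr rfl fun L hL => ?_)
      rw [← hneg _ (mem_crossPolytopeFacets_cons.2 ⟨L, hL, .inl rfl⟩) _ le_rfl, Multiset.map_cons,
        Function.comp_apply]
    have hprev : ∀ N ∈ crossPolytopeFacets l, ∀ M ≤ N, g (M.map Neg.neg) = g' M :=
      fun N hN M hM => hneg _ (mem_crossPolytopeFacets_cons.2 ⟨N, hN, .inl rfl⟩) M
        (hM.trans (Multiset.le_cons_self N v))
    calc ((crossPolytopeFacets (v :: l)).map g).sum
        = ((crossPolytopeFacets l).map fun L => coboundary g (v ::ₘ L)).sum := by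
          simp only [crossPolytopeFacets, Multiset.map_add, Multiset.map_map, Function.comp_def,
            Multiset.sum_add, hantipode, hg, Multiset.sum_map_add]
      _ = g 0 := by
          simp only [coboundary_cons, Multiset.sum_map_add, sum_coboundary_crossPolytopeFacets,
            ih hprev, add_zero]

end CrossPolytope

section CrossPolytopeBoundary

variable {E : Type*} [AddCommGroup E] [Module ℝ E]

/-- The boundary of the cross-polytope with vertices `v` and `-v` for `v` in the given list. -/
def crossPolytopeBoundary (l : List E) : Set E :=
  ⋃ N ∈ crossPolytopeFacets l, convexHull ℝ {x | x ∈ N}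

lemma crossPolytopeBoundary_nonempty {l : List E} (hl : l ≠ []) :
    (crossPolytopeBoundary l).Nonempty := by
  obtain ⟨v, hv⟩ := List.exists_mem_of_ne_nil l hl
  exact ⟨v, Set.mem_biUnion (coe_mem_crossPolytopeFacets l) (subset_convexHull ℝ _ hv)⟩

lemma convexHull_subset_crossPolytopeBoundary {l : List E} {M N : Multiset E}
    (hN : N ∈ crossPolytopeFacets l) (hM : M ≤ N) :
    convexHull ℝ {x | x ∈ M} ⊆ crossPolytopeBoundary l :=
  fun _ hx => Set.mem_biUnion hN (convexHull_mono (fun _ => Multiset.mem_of_le hM) hx)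

lemma zero_notMem_crossPolytopeBoundary {κ : Type*} (b : Module.Basis κ ℝ E) {l : List κ}
    (hl : l.Nodup) : (0 : E) ∉ crossPolytopeBoundary (l.map b) := by
  rw [crossPolytopeBoundary, Set.mem_iUnion₂]
  rintro ⟨N, hN, h0⟩
  obtain ⟨s, rfl⟩ := exists_eq_map_smul_of_mem_crossPolytopeFacets hl hN
  let φ : E →ₗ[ℝ] ℝ := b.constr ℝ fun i => ((s i : ℤ) : ℝ)
  have hφ : {x | x ∈ (↑(l.map fun i => s i • b i) : Multiset E)} ⊆ {x | φ x = 1} := by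
    intro x hx
    obtain ⟨i, -, rfl⟩ := List.mem_map.1 hx
    have hs : ((s i : ℤ) : ℝ) * (s i : ℤ) = 1 := by
      exact_mod_cast Int.units_coe_mul_self (s i)
    simpa [φ, Units.smul_def] using hs
  have hzero := convexHull_min hφ (convex_hyperplane φ.isLinear 1) h0
  simp at hzero

variable [DecidableEq E]

/-- A form of **Tucker's lemma**. -/
lemma exists_eq_opposite_of_isSubdivision {ι : Type*} [Fintype ι]
    {T : Multiset E → Multiset (Multiset E)} (hT : IsSubdivision T) {l : List E}
    (hl : Fintype.card ι < l.length) {label : E → ι ×ₗ Bool}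
    (hlabel : ∀ x ∈ crossPolytopeBoundary l, label (-x) = opposite (label x)) :
    ∃ N ∈ crossPolytopeFacets l, ∃ M ≤ N, ∃ L ∈ T M, ∃ x ∈ L, ∃ y ∈ L,
      label y = opposite (label x) := by
  by_contra! hno
  let _ : LinearOrder ι := LinearOrder.lift' _ (Fintype.equivFin ι).injective
  have hcompl : ∀ N ∈ crossPolytopeFacets l, ∀ M ≤ N, ∀ L ∈ T M,
      ∀ p ∈ L.map label, ∀ q ∈ L.map label, q ≠ opposite p := by
    simpa only [Multiset.forall_mem_map_iff] using hno
  let g (b : Bool) (M : Multiset E) : ZMod 2 :=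
    ((T M).map fun L => alternatingCochain (fun p => (ofLex p).2) b (L.map label)).sum
  have hcob (M : Multiset E) : coboundary (g true) M = g true M + g false M := by
    simp only [g, ← hT.sum_coboundary, coboundary_comp_map, coboundary_alternatingCochain,
      Multiset.sum_map_add, Bool.not_true]
  have hneg : ∀ N ∈ crossPolytopeFacets l, ∀ M ≤ N, g true (M.map Neg.neg) = g false M := by
    intro N hN M hM
    simp only [g, hT.map_neg, Multiset.map_map, Function.comp_apply]
    refine congrArg _ (Multiset.map_congr rfl fun L hL => ?_)
    rw [← Bool.not_true, ← alternatingCochain_map_opposite (hcompl N hN M hM L hL),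
      Multiset.map_map]
    refine congrArg _ (Multiset.map_congr rfl fun x hx => hlabel x ?_)
    exact convexHull_subset_crossPolytopeBoundary hN hM (hT.mem_convexHull hL hx)
  have hone : ((crossPolytopeFacets l).map (g true)).sum = 1 := by
    rw [sum_crossPolytopeFacets_eq hcob hneg]
    simp [g, hT.map_zero]
  have hvanish : ∀ N ∈ crossPolytopeFacets l, g true N = 0 := by
    refine fun N hN => Multiset.sum_eq_zero <| Multiset.forall_mem_map_iff.2 fun L hL => ?_
    by_contra hne
    have hle := card_le_of_alternatingCochain_ne_zero (hcompl N hN N le_rfl L hL) hne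
    rw [Multiset.card_map, hT.card_eq hL, card_of_mem_crossPolytopeFacets hN] at hle
    exact hl.not_ge hle
  rw [Multiset.sum_eq_zero (Multiset.forall_mem_map_iff.2 hvanish)] at hone
  exact zero_ne_one hone

end CrossPolytopeBoundary

section BorsukUlam

variable {ι : Type*} [Fintype ι]

lemma exists_abs_apply_eq_norm [Nonempty ι] (u : ι → ℝ) : ∃ i, |u i| = ‖u‖ := by
  obtain ⟨i, hi⟩ := Finite.exists_max fun i => |u i|
  exact ⟨i, (norm_le_pi_norm u i).antisymm ((pi_norm_le_iff_of_nonneg (abs_nonneg _)).2 hi)⟩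

lemma abs_le_abs_sub_of_not_pos_iff {a b : ℝ} (h : ¬(0 < a ↔ 0 < b)) : |a| ≤ |a - b| := by
  grind

variable {E : Type*} [NormedAddCommGroup E] [NormedSpace ℝ E]

lemma isCompact_crossPolytopeBoundary (l : List E) : IsCompact (crossPolytopeBoundary l) := by
  classical
  exact (crossPolytopeFacets l).finite_toSet.isCompact_biUnion
    fun N _ => N.finite_toSet.isCompact_convexHull ℝ

lemma exists_dist_lt_eq_opposite {l : List E} (hl : Fintype.card ι < l.length)
    {label : E → ι ×ₗ Bool}
    (hlabel : ∀ x ∈ crossPolytopeBoundary l, label (-x) = opposite (label x)) {ε : ℝ}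
    (hε : 0 < ε) :
    ∃ x ∈ crossPolytopeBoundary l, ∃ y ∈ crossPolytopeBoundary l,
      dist x y < ε ∧ label y = opposite (label x) := by
  classical
  obtain ⟨T, hT, hmesh⟩ := exists_isSubdivision_dist_lt (E := E) l.length
    (Metric.diam (crossPolytopeBoundary l)) hε
  obtain ⟨N, hN, M, hM, L, hL, x, hx, y, hy, hxy⟩ :=
    exists_eq_opposite_of_isSubdivision hT hl hlabel
  have hhull := convexHull_subset_crossPolytopeBoundary hN hM
  have hdiam : ∀ v ∈ M, ∀ w ∈ M, dist v w ≤ Metric.diam (crossPolytopeBoundary l) :=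
    fun v hv w hw => Metric.dist_le_diam_of_mem (isCompact_crossPolytopeBoundary l).isBounded
      (hhull (subset_convexHull ℝ _ hv)) (hhull (subset_convexHull ℝ _ hw))
  have hcard : M.card ≤ l.length + 1 :=
    (Multiset.card_le_card hM).trans ((card_of_mem_crossPolytopeFacets hN).trans_le (by omega))
  exact ⟨x, hhull (hT.mem_convexHull hL hx), y, hhull (hT.mem_convexHull hL hy),
    hmesh M hcard hdiam L hL x hx y hy, hxy⟩

lemma borsuk_ulam_crossPolytope {l : List E} (hl : Fintype.card ι < l.length) {f : E → ι → ℝ}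
    (hf : ContinuousOn f (crossPolytopeBoundary l))
    (hodd : ∀ x ∈ crossPolytopeBoundary l, f (-x) = -f x) :
    ∃ x ∈ crossPolytopeBoundary l, f x = 0 := by
  have hK := isCompact_crossPolytopeBoundary l
  rcases isEmpty_or_nonempty ι with hι | hι
  · obtain ⟨x, hx⟩ := crossPolytopeBoundary_nonempty (List.ne_nil_of_length_pos hl.pos)
    exact ⟨x, hx, Subsingleton.elim _ _⟩
  by_contra! hne
  obtain ⟨m, hm, hmin⟩ := hK.exists_forall_le' hf.norm fun x hx => norm_pos_iff.2 (hne x hx)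
  obtain ⟨δ, hδ, hunif⟩ := Metric.uniformContinuousOn_iff.1
    (hK.uniformContinuousOn_of_continuous hf) m hm
  choose idx hidx using exists_abs_apply_eq_norm (ι := ι)
  have hmax (u : ι → ℝ) : |u (idx |u|)| = ‖u‖ := by
    simpa [Pi.norm_def] using hidx |u|
  let label : E → ι ×ₗ Bool := fun x => toLex (idx |f x|, decide (0 < f x (idx |f x|)))
  have hlabel : ∀ x ∈ crossPolytopeBoundary l, label (-x) = opposite (label x) := by
    intro x hx
    have hcoord : f x (idx |f x|) ≠ 0 := abs_pos.1 ((hmax (f x)).symm ▸ norm_pos_iff.2 (hne x hx))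
    simp only [label, opposite, hodd x hx, abs_neg, Pi.neg_apply, Left.neg_pos_iff, ofLex_toLex,
      ← decide_not, not_lt, hcoord.le_iff_lt]
  obtain ⟨x, hx, y, hy, hxy, hopp⟩ := exists_dist_lt_eq_opposite hl hlabel hδ
  obtain ⟨hi, hsign⟩ := eq_opposite_iff.1 hopp
  have hsign' : ¬(0 < f x (idx |f x|) ↔ 0 < f y (idx |f x|)) := by
    have hi' : idx |f x| = idx |f y| := hi
    simpa [label, ← hi'] using hsign
  refine (hunif x hx y hy hxy).not_ge ?_
  calc m ≤ ‖f x‖ := hmin x hx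
    _ = |f x (idx |f x|)| := (hmax (f x)).symm
    _ ≤ |f x (idx |f x|) - f y (idx |f x|)| := abs_le_abs_sub_of_not_pos_iff hsign'
    _ ≤ dist (f x) (f y) := dist_le_pi_dist (f x) (f y) _

theorem borsuk_ulam (hι : Fintype.card ι < Module.finrank ℝ E) {f : E → ι → ℝ}
    (hf : ContinuousOn f (Metric.sphere 0 1)) (hodd : ∀ x ∈ Metric.sphere 0 1, f (-x) = -f x) :
    ∃ x ∈ Metric.sphere (0 : E) 1, f x = 0 := by
  have : FiniteDimensional ℝ E := .of_finrank_pos hι.pos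
  let l : List E := (List.finRange _).map (Module.finBasis ℝ E)
  have hl : Fintype.card ι < l.length := by simpa [l] using hι
  have hne : ∀ x ∈ crossPolytopeBoundary l, x ≠ 0 := fun x hx h0 =>
    zero_notMem_crossPolytopeBoundary (Module.finBasis ℝ E) (List.nodup_finRange _) (h0 ▸ hx)
  have hnormalize : Set.MapsTo NormedSpace.normalize (crossPolytopeBoundary l)
      (Metric.sphere (0 : E) 1) := fun x hx =>
    mem_sphere_zero_iff_norm.2 (NormedSpace.norm_normalize_eq_one_iff.2 (hne x hx))
  have hcont : ContinuousOn (NormedSpace.normalize (V := E)) (crossPolytopeBoundary l) :=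
    (continuousOn_id.norm.inv₀ fun x hx => norm_ne_zero_iff.2 (hne x hx)).smul continuousOn_id
  obtain ⟨x, hx, hfx⟩ := borsuk_ulam_crossPolytope hl (hf.comp hcont hnormalize)
    fun x hx => by
      rw [Function.comp_apply, NormedSpace.normalize_neg, hodd _ (hnormalize hx),
        Function.comp_apply]
  exact ⟨_, hnormalize hx, hfx⟩

end BorsukUlam

section Splitting

variable {X : Type*} [TopologicalSpace X] [CompactSpace X] [T2Space X] {τ : X → X}

lemma exists_isClopen_mem_disjoint_preimage (hτ : Continuous τ) {x : X}
    (hx : τ x ∉ connectedComponent x) :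
    ∃ A : Set X, IsClopen A ∧ x ∈ A ∧ Disjoint A (τ ⁻¹' A) := by
  rw [connectedComponent_eq_iInter_isClopen, Set.mem_iInter] at hx
  push Not at hx
  obtain ⟨⟨C, hC, hxC⟩, hτx⟩ := hx
  exact ⟨C \ τ ⁻¹' C, hC.diff (hC.preimage hτ), ⟨hxC, hτx⟩,
    Set.disjoint_left.2 fun y hy hy' => hy.2 hy'.1⟩

lemma exists_isClopen_preimage_eq_compl (hτ : Continuous τ) (hinv : Function.Involutive τ)
    (hcomp : ∀ x, τ x ∉ connectedComponent x) : ∃ A : Set X, IsClopen A ∧ τ ⁻¹' A = Aᶜ := by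
  suffices ∃ A : Set X, IsClopen A ∧ Disjoint A (τ ⁻¹' A) ∧ Set.univ ⊆ A ∪ τ ⁻¹' A by
    obtain ⟨A, hA, hdisj, hcov⟩ := this
    exact ⟨A, hA, (IsCompl.of_le hdisj.le_bot hcov).compl_eq.symm⟩
  refine isCompact_univ.induction_on (p := fun s => ∃ A : Set X, IsClopen A ∧
    Disjoint A (τ ⁻¹' A) ∧ s ⊆ A ∪ τ ⁻¹' A) ?_ ?_ ?_ ?_
  · exact ⟨∅, isClopen_empty, by simp, by simp⟩
  · rintro s t hst ⟨A, hA, hdisj, hcov⟩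
    exact ⟨A, hA, hdisj, hst.trans hcov⟩
  · rintro s t ⟨A, hA, hA', hs⟩ ⟨B, hB, hB', ht⟩
    refine ⟨A ∪ (B \ (A ∪ τ ⁻¹' A)), hA.union (hB.diff (hA.union (hA.preimage hτ))), ?_, ?_⟩
    · rw [Set.disjoint_left] at hA' hB' ⊢
      intro x
      have hx := hA' (a := x)
      have hx' := hB' (a := x)
      simp only [Set.mem_union, Set.mem_sdiff, Set.mem_preimage, hinv x] at hx hx' ⊢
      tauto
    · intro x hx
      have hsx := @hs x
      have htx := @ht x
      simp only [Set.mem_union, Set.mem_sdiff, Set.mem_preimage, hinv x] at hx hsx htx ⊢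
      tauto
  · intro x _
    obtain ⟨A, hA, hxA, hdisj⟩ := exists_isClopen_mem_disjoint_preimage hτ (hcomp x)
    exact ⟨A, mem_nhdsWithin_of_mem_nhds (hA.isOpen.mem_nhds hxA), A, hA, hdisj,
      Set.subset_union_left⟩

lemma exists_continuous_odd_ne_zero {E : Type*} [TopologicalSpace E] [T4Space E] [InvolutiveNeg E]
    [ContinuousNeg E] {F : Set E} (hF : IsCompact F) (hneg : ∀ x ∈ F, -x ∈ F)
    (hcomp : ∀ x ∈ F, -x ∉ connectedComponentIn F x) :
    ∃ f : E → ℝ, Continuous f ∧ (∀ x, f (-x) = -f x) ∧ ∀ x ∈ F, f x ≠ 0 := by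
  have : CompactSpace F := isCompact_iff_compactSpace.1 hF
  let τ : F → F := fun x => ⟨-x, hneg x x.2⟩
  obtain ⟨A, hA, hτA⟩ := exists_isClopen_preimage_eq_compl (τ := τ) (by fun_prop)
    (fun x => Subtype.ext (neg_neg _)) fun x hx => hcomp x x.2 <| by
      rw [connectedComponentIn_eq_image x.2]
      exact ⟨τ x, hx, rfl⟩
  obtain ⟨t, ht⟩ := ContinuousMap.exists_restrict_eq hF.isClosed
    ⟨A.indicator (1 : F → ℝ), hA.continuous_indicator continuous_one⟩
  refine ⟨fun x => t x - t (-x), by fun_prop, fun x => by simp, fun x hx => ?_⟩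
  have htA (y : F) : t y = A.indicator 1 y := DFunLike.congr_fun ht y
  have hx' : τ ⟨x, hx⟩ ∈ A ↔ (⟨x, hx⟩ : F) ∉ A := Set.ext_iff.1 hτA ⟨x, hx⟩
  change t (⟨x, hx⟩ : F) - t (τ ⟨x, hx⟩) ≠ 0
  rw [htA, htA]
  by_cases h : (⟨x, hx⟩ : F) ∈ A <;> simp [h, hx']

end Splitting

end SignedBorsukUlam

theorem signed_borsuk_ulam_closed_general {E : Type*} [NormedAddCommGroup E] [NormedSpace ℝ E]
    {ι : Type*} [Fintype ι] (hι : Fintype.card ι < Module.finrank ℝ E) (F : ι → Set E)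
    (hsub : ∀ i, F i ⊆ Metric.sphere 0 1) (hclosed : ∀ i, IsClosed (F i))
    (hsymm : ∀ i, ∀ x ∈ F i, -x ∈ F i) (hcover : Metric.sphere 0 1 ⊆ ⋃ i, F i) :
    ∃ i, ∃ x ∈ F i, -x ∈ connectedComponentIn (F i) x := by
  by_contra! hno
  have : FiniteDimensional ℝ E := .of_finrank_pos hι.pos
  have : ProperSpace E := FiniteDimensional.proper_real E
  have hcompact (i : ι) : IsCompact (F i) := (isCompact_sphere 0 1).of_isClosed_subset (hclosed i)
    (hsub i)
  choose f hcont hodd hne using fun i =>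
    SignedBorsukUlam.exists_continuous_odd_ne_zero (hcompact i) (hsymm i) (hno i)
  obtain ⟨x, hx, hfx⟩ := SignedBorsukUlam.borsuk_ulam hι (f := fun x i => f i x)
    (continuous_pi hcont).continuousOn fun x _ => funext fun i => hodd i x
  obtain ⟨i, hi⟩ := Set.mem_iUnion.1 (hcover hx)
  exact hne i x hi (congrFun hfx i)

/-- signed Borsuk–Ulam, closed form: for every cover of the sphere `S^d` by `d`
antipodally symmetric closed sets `F_1,…,F_d`, some `F_i` contains a pair of antipodal points
lying in the same connected component of `F_i`. -/
theorem signed_borsuk_ulam_closed (d : ℕ)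
    (F : Fin d → Set (EuclideanSpace ℝ (Fin (d + 1))))
    (hsub : ∀ i, F i ⊆ Metric.sphere (0 : EuclideanSpace ℝ (Fin (d + 1))) 1)
    (hclosed : ∀ i, IsClosed (F i))
    (hsymm : ∀ i, ∀ x ∈ F i, -x ∈ F i)
    (hcover : Metric.sphere (0 : EuclideanSpace ℝ (Fin (d + 1))) 1 ⊆ ⋃ i, F i) :
    ∃ i, ∃ x ∈ F i, -x ∈ connectedComponentIn (F i) x :=
  signed_borsuk_ulam_closed_general (by simp) F hsub hclosed hsymm hcover
end

section
/- For all n ≥ k ≥ 1, χ(ŜK(n,k)⁻) = χ(ŜS(n,k)⁻) = n−k+1, where ŜK(n,k) and ŜS(n,k) are the subgraphs of KS(n,k) and SS(n,k) induced by vertices whose smallest-absolute-value element is positive, and G⁻ denotes the graph on the same vertices whose edges are the negative edges. -/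
/-- The (ordinary) chromatic number of a graph given by its adjacency relation. -/
noncomputable def chromNum {V : Type*} (adj : V → V → Prop) : ℕ :=
  sInf {m : ℕ | ∃ c : V → Fin m, ∀ u v : V, adj u v → c u ≠ c v}

/-- Vertices of the half signed Kneser graph `ŜK(n,k)`: signed `k`-subsets whose
smallest-absolute-value element is positive. -/
def HKSVertex (n k : ℕ) : Type := {A : Finset ℤ // IsSignedKSubset n k A ∧ FirstPos A}

/-- Vertices of the half signed Schrijver graph `ŜS(n,k)`. -/
def HSSVertex (n k : ℕ) : Type :=
  {A : Finset ℤ // IsSignedKSubset n k A ∧ IsAlternating A ∧ FirstPos A}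

/-! **Idea.** Call a family of finite sets antipodal if it contains exactly one of `X`, `-X` for
every nonempty signed set `X` of `[n]`. The number of complete flags of signed sets
`∅ ⊂ X₁ ⊂ … ⊂ Xₙ` all of whose nonempty members lie in a given antipodal family is odd.
This is a parity form of the lemmas of Tucker and Fan: modulo 2, the flags ending at `X` or `-X`
are the flags ending just below `X`, and induction on `n` works because each signed set of
size `n - 1` is missing exactly one index and so is covered twice.

Now let `f` be a monotone function on sets with `f X ≠ f (-X)` for every nonempty signed set `X`.
Choosing the family so that the sign of `f X - f (-X)` alternates along a flag in it,
`max (f X) (f (-X))` increases strictly along such a flag, hence `f` reaches `n`.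
Given a proper colouring `c` of `ŜS(n,k)⁻`, take for `f X` the largest weight of an alternating
signed set `A ⊆ X` with first element positive and `|A| ≤ k`, where `A` has weight `|A|` if
`|A| < k` and `k + c A` if `|A| = k`. Properness rules out `f X = f (-X) ≥ k`, and if `X` starts
with a positive element `a`, then `{a} ∪ -B` with `B` optimal for `-X` rules out
`f X = f (-X) < k`. So some colour is at least `n - k`. Conversely, colouring `A` by its first
element uses only the colours `1, …, n - k + 1`.
-/

open scoped Pointwise

section Colorability

variable {V W : Type*}

/-- Proper colourability with `m` colours, the condition minimised in `chromNum`. -/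
def IsColorable (adj : V → V → Prop) (m : ℕ) : Prop :=
  ∃ c : V → Fin m, ∀ u v, adj u v → c u ≠ c v

theorem chromNum_eq_of_isLeast {adj : V → V → Prop} {m : ℕ}
    (h : IsLeast {m | IsColorable adj m} m) : chromNum adj = m :=
  h.csInf_eq

theorem IsColorable.comap {adjV : V → V → Prop} {adjW : W → W → Prop} {m : ℕ}
    (h : IsColorable adjW m) (f : V → W) (hf : ∀ u v, adjV u v → adjW (f u) (f v)) :
    IsColorable adjV m :=
  let ⟨c, hc⟩ := h
  ⟨c ∘ f, fun u v huv => hc (f u) (f v) (hf u v huv)⟩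

end Colorability

section Flags

variable {α : Type*} [DecidableEq α] {𝒮 𝒯 : Set (Finset α)} {X : Finset α}

open Classical in
/-- The number, modulo 2, of complete flags `∅ ⊂ X₁ ⊂ … ⊂ X` (one element added at a time) all of
whose nonempty members belong to the family `𝒯`, computed by removing the last element added. -/
noncomputable def flagParity (𝒯 : Set (Finset α)) (X : Finset α) : ZMod 2 :=
  if X = ∅ then 1
  else if X ∈ 𝒯 then ∑ x : X, flagParity 𝒯 (X.erase x) else 0
termination_by X.card
decreasing_by exact Finset.card_erase_lt_of_mem x.2

theorem flagParity_empty : flagParity 𝒯 ∅ = 1 := by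
  rw [flagParity, if_pos rfl]

theorem flagParity_of_mem (hX : X.Nonempty) (h : X ∈ 𝒯) :
    flagParity 𝒯 X = ∑ x ∈ X, flagParity 𝒯 (X.erase x) := by
  rw [flagParity, if_neg hX.ne_empty, if_pos h]
  exact Finset.sum_coe_sort X fun x => flagParity 𝒯 (X.erase x)

theorem flagParity_of_notMem (hX : X.Nonempty) (h : X ∉ 𝒯) : flagParity 𝒯 X = 0 := by
  rw [flagParity, if_neg hX.ne_empty, if_neg h]

theorem flagParity_ne_zero_induction {P : Finset α → Prop} (empty : P ∅)
    (step : ∀ Y ⊆ X, Y ∈ 𝒯 → ∀ x ∈ Y, P (Y.erase x) → P Y) (h : flagParity 𝒯 X ≠ 0) : P X := by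
  induction X using Finset.strongInduction with
  | H X ih =>
    rcases X.eq_empty_or_nonempty with rfl | hX
    · exact empty
    have hmem : X ∈ 𝒯 := by_contra fun hn => h (flagParity_of_notMem hX hn)
    rw [flagParity_of_mem hX hmem] at h
    obtain ⟨x, hx, hne⟩ := Finset.exists_ne_zero_of_sum_ne_zero h
    refine step X subset_rfl hmem x hx (ih _ (Finset.erase_ssubset hx) (fun Y hY => ?_) hne)
    exact step Y (hY.trans (X.erase_subset x))

theorem sum_sum_erase_erase {R : Type*} [Semiring R] [CharP R 2] (X : Finset α)
    (g : Finset α → R) : ∑ x ∈ X, ∑ y ∈ X.erase x, g ((X.erase x).erase y) = 0 := by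
  rw [Finset.sum_sigma']
  refine Finset.sum_involution (fun p _ => ⟨p.2, p.1⟩) ?_ ?_ ?_ ?_
  · rintro ⟨x, y⟩ -
    dsimp only
    rw [Finset.erase_right_comm]
    exact CharTwo.add_self_eq_zero _
  · rintro ⟨x, y⟩ hxy - heq
    obtain ⟨-, hy⟩ := Finset.mem_sigma.mp hxy
    exact Finset.ne_of_mem_erase hy (congrArg Sigma.fst heq)
  · rintro ⟨x, y⟩ hxy
    simp only [Finset.mem_sigma, Finset.mem_erase] at hxy ⊢
    exact ⟨hxy.2.2, hxy.2.1.symm, hxy.1⟩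
  · intros
    rfl

/-- This is `d ∘ d = 0` for the operator `(d g) X = ∑ x ∈ X, g (X \ {x})`: where `X ∉ 𝒯`, the claim
reduces to `d (flagParity 𝒯 + flagParity 𝒯ᶜ) X = 0`, and below `X` the sum is `d (flagParity 𝒯)`. -/
theorem flagParity_add_flagParity_compl (hX : X.Nonempty) :
    flagParity 𝒯 X + flagParity 𝒯ᶜ X = ∑ x ∈ X, flagParity 𝒯 (X.erase x) := by
  induction X using Finset.strongInduction with
  | H X ih =>
    by_cases hmem : X ∈ 𝒯
    · rw [flagParity_of_mem hX hmem, flagParity_of_notMem hX (Set.notMem_compl_iff.mpr hmem),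
        add_zero]
    rw [flagParity_of_notMem hX hmem, flagParity_of_mem hX hmem, zero_add, eq_comm,
      ← CharTwo.add_eq_zero, ← Finset.sum_add_distrib]
    rcases hX.exists_eq_singleton_or_nontrivial with ⟨x, rfl⟩ | hX'
    · simp only [Finset.sum_singleton, Finset.erase_singleton, flagParity_empty]
      exact CharTwo.add_self_eq_zero 1
    · calc ∑ x ∈ X, (flagParity 𝒯 (X.erase x) + flagParity 𝒯ᶜ (X.erase x))
          = ∑ x ∈ X, ∑ y ∈ X.erase x, flagParity 𝒯 ((X.erase x).erase y) :=
            Finset.sum_congr rfl fun x hx =>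
              ih _ (Finset.erase_ssubset hx) hX'.erase_nonempty
        _ = 0 := sum_sum_erase_erase X _

theorem flagParity_neg [InvolutiveNeg α]
    (h : ∀ Y ⊆ X, Y.Nonempty → (-Y ∈ 𝒯 ↔ Y ∈ 𝒮)) : flagParity 𝒯 (-X) = flagParity 𝒮 X := by
  induction X using Finset.strongInduction with
  | H X ih =>
    rcases X.eq_empty_or_nonempty with rfl | hX
    · rw [Finset.neg_empty, flagParity_empty, flagParity_empty]
    by_cases hmem : X ∈ 𝒮
    · rw [flagParity_of_mem hX hmem, flagParity_of_mem hX.neg ((h X subset_rfl hX).mpr hmem),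
        Finset.sum_neg_index]
      refine Finset.sum_congr rfl fun x hx => ?_
      rw [← ih _ (Finset.erase_ssubset hx) fun Y hY => h Y (hY.trans (X.erase_subset x))]
      congr 1
      ext y
      simp only [Finset.mem_erase, Finset.mem_neg', ne_eq, neg_eq_iff_eq_neg]
    · rw [flagParity_of_notMem hX hmem,
        flagParity_of_notMem hX.neg (mt (h X subset_rfl hX).mp hmem)]

/-- Along a flag in this family, `f Y - f (-Y)` is alternately positive and negative, so
monotonicity makes `max (f Y) (f (-Y))` grow at each step. -/
theorem card_le_max_of_flagParity_ne_zero [InvolutiveNeg α] {f : Finset α → ℕ} (hf : Monotone f)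
    (hne : ∀ Y ⊆ X, Y.Nonempty → f Y ≠ f (-Y))
    (h : flagParity {Y | Odd Y.card ↔ f (-Y) < f Y} X ≠ 0) : X.card ≤ max (f X) (f (-X)) := by
  suffices (Odd X.card → X.card ≤ f X) ∧ (Even X.card → X.card ≤ f (-X)) by
    rcases Nat.even_or_odd X.card with heven | hodd
    · exact le_max_of_le_right (this.2 heven)
    · exact le_max_of_le_left (this.1 hodd)
  refine flagParity_ne_zero_induction
    (P := fun Y => (Odd Y.card → Y.card ≤ f Y) ∧ (Even Y.card → Y.card ≤ f (-Y)))
    (by simp) ?_ h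
  intro Y hYX (hY : Odd Y.card ↔ f (-Y) < f Y) x hx ⟨ih_odd, ih_even⟩
  have hcard : (Y.erase x).card + 1 = Y.card := Finset.card_erase_add_one hx
  have hmono : f (Y.erase x) ≤ f Y := hf (Y.erase_subset x)
  have hmono_neg : f (-Y.erase x) ≤ f (-Y) := hf (Finset.neg_subset_neg (Y.erase_subset x))
  constructor
  · intro hodd
    have heven : Even (Y.erase x).card := by rw [← hcard] at hodd; grind
    have := ih_even heven
    have := hY.mp hodd
    omega
  · intro heven
    have hodd : Odd (Y.erase x).card := by rw [← hcard] at heven; grind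
    have := ih_odd hodd
    have hlt : f Y < f (-Y) :=
      (not_lt.mp (mt hY.mpr (Nat.not_odd_iff_even.mpr heven))).lt_of_ne (hne Y hYX ⟨x, hx⟩)
    omega

end Flags

section SignedSubsets

variable {n k : ℕ} {X Y : Finset ℤ}

/-- The signed subsets of `[n]` of unspecified size, so that `IsSignedKSubset n k X` unfolds to
`X.card = k ∧ IsSignedSubset n X`. -/
def IsSignedSubset (n : ℕ) (X : Finset ℤ) : Prop :=
  (∀ a ∈ X, a ≠ 0 ∧ a.natAbs ≤ n) ∧ ∀ a ∈ X, -a ∉ X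

theorem IsSignedSubset.subset (hX : IsSignedSubset n X) (hYX : Y ⊆ X) : IsSignedSubset n Y :=
  ⟨fun a ha => hX.1 a (hYX ha), fun a ha h => hX.2 a (hYX ha) (hYX h)⟩

theorem IsSignedSubset.neg (hX : IsSignedSubset n X) : IsSignedSubset n (-X) := by
  refine ⟨fun a ha => ?_, fun a ha h => hX.2 _ (Finset.mem_neg'.mp ha) (Finset.mem_neg'.mp h)⟩
  have := hX.1 _ (Finset.mem_neg'.mp ha)
  omega

theorem IsSignedSubset.disjoint_neg (hX : IsSignedSubset n X) : Disjoint X (-X) :=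
  Finset.disjoint_left.mpr fun a ha h => hX.2 a ha (Finset.mem_neg'.mp h)

theorem IsSignedSubset.injOn_natAbs (hX : IsSignedSubset n X) : Set.InjOn Int.natAbs X :=
  fun _ ha b hb hab => (Int.natAbs_eq_natAbs_iff.mp hab).resolve_right fun h =>
    hX.2 b hb (h ▸ ha)

theorem IsSignedKSubset.neg (hX : IsSignedKSubset n k X) : IsSignedKSubset n k (-X) :=
  ⟨(Finset.card_neg X).trans hX.1, IsSignedSubset.neg hX.2⟩

theorem IsSignedKSubset.insert_neg_erase {x : ℤ} (hX : IsSignedKSubset n k X) (hx : x ∈ X) :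
    IsSignedKSubset n k (insert (-x) (X.erase x)) := by
  obtain ⟨hcard, hbound, hneg⟩ := hX
  refine ⟨?_, fun a ha => ?_, fun a ha h => ?_⟩
  · rw [Finset.card_insert_of_notMem fun h => hneg x hx (Finset.mem_of_mem_erase h),
      Finset.card_erase_add_one hx, hcard]
  · rcases Finset.mem_insert.mp ha with rfl | ha
    · simpa using hbound x hx
    · exact hbound a (Finset.mem_of_mem_erase ha)
  · have := (hbound x hx).1
    grind

theorem IsSignedKSubset.insert_succ (hX : IsSignedKSubset n k X) :
    IsSignedKSubset (n + 1) (k + 1) (insert (n + 1 : ℤ) X) := by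
  obtain ⟨hcard, hbound, hneg⟩ := hX
  refine ⟨?_, fun a ha => ?_, fun a ha h => ?_⟩
  · rw [Finset.card_insert_of_notMem fun h => by have := (hbound _ h).2; omega, hcard]
  · rcases Finset.mem_insert.mp ha with rfl | ha
    · omega
    · have := hbound a ha
      omega
  · grind

theorem IsSignedKSubset.erase_succ (hX : IsSignedKSubset (n + 1) (k + 1) X)
    (hn : (n + 1 : ℤ) ∈ X) : IsSignedKSubset n k (X.erase (n + 1)) := by
  obtain ⟨hcard, hbound, hneg⟩ := hX
  refine ⟨by rw [Finset.card_erase_of_mem hn, hcard, Nat.add_sub_cancel], fun a ha => ?_,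
    fun a ha h => hneg a (Finset.mem_of_mem_erase ha) (Finset.mem_of_mem_erase h)⟩
  obtain ⟨hne, ha⟩ := Finset.mem_erase.mp ha
  have hne' : a ≠ -(n + 1) := fun h => hneg _ hn (h ▸ ha)
  have := hbound a ha
  omega

theorem IsSignedKSubset.mem_or_neg_mem (hX : IsSignedKSubset n n X) {z : ℤ} (hz : z ≠ 0)
    (hzn : z.natAbs ≤ n) : z ∈ X ∨ -z ∈ X := by
  have himage : X.image Int.natAbs = Finset.Icc 1 n := by
    refine Finset.eq_of_subset_of_card_le (Finset.image_subset_iff.mpr fun a ha => ?_) ?_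
    · have := hX.2.1 a ha
      exact Finset.mem_Icc.mpr (by omega)
    · rw [Finset.card_image_of_injOn (IsSignedSubset.injOn_natAbs hX.2), hX.1, Nat.card_Icc,
        Nat.add_sub_cancel]
  have hmem : z.natAbs ∈ X.image Int.natAbs := himage ▸ Finset.mem_Icc.mpr (by omega)
  obtain ⟨a, ha, haz⟩ := Finset.mem_image.mp hmem
  rcases Int.natAbs_eq_natAbs_iff.mp haz with rfl | rfl
  · exact Or.inl ha
  · exact Or.inr ha

end SignedSubsets

section Orthants

variable {n : ℕ}

open Classical in
/-- The signed `n`-subsets of `[n]`, that is, the orthants of `ℝⁿ` or the facets of the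
`n`-dimensional cross-polytope. -/
noncomputable def orthants (n : ℕ) : Finset (Finset ℤ) :=
  (Finset.Icc (-n : ℤ) n).powerset.filter fun X => IsSignedKSubset n n X

theorem mem_orthants {X : Finset ℤ} : X ∈ orthants n ↔ IsSignedKSubset n n X := by
  classical
  rw [orthants, Finset.mem_filter, Finset.mem_powerset, and_iff_right_iff_imp]
  intro hX a ha
  have := hX.2.1 a ha
  exact Finset.mem_Icc.mpr (by omega)

theorem orthants_zero : orthants 0 = {∅} := by
  ext X
  rw [mem_orthants, Finset.mem_singleton, IsSignedKSubset, Finset.card_eq_zero]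
  exact ⟨fun h => h.1, by rintro rfl; simp⟩

theorem sum_orthants_succ {M : Type*} [AddCommMonoid M] (n : ℕ) (g : Finset ℤ → M) :
    ∑ X ∈ orthants (n + 1), g X =
      ∑ X ∈ orthants n, (g (insert (n + 1 : ℤ) X) + g (-insert (n + 1 : ℤ) X)) := by
  classical
  have notMem : ∀ X ∈ orthants n, (n + 1 : ℤ) ∉ X := fun X hX h => by
    have := (mem_orthants.mp hX).2.1 _ h
    omega
  have sum_half : ∀ g' : Finset ℤ → M, ∑ X ∈ orthants (n + 1) with (n + 1 : ℤ) ∈ X, g' X =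
      ∑ X ∈ orthants n, g' (insert (n + 1 : ℤ) X) := fun g' => by
    refine Finset.sum_bij' (fun X _ => X.erase (n + 1)) (fun X _ => insert (n + 1 : ℤ) X)
      ?_ ?_ ?_ ?_ ?_
    · intro X hX
      rw [Finset.mem_filter, mem_orthants] at hX
      exact mem_orthants.mpr (hX.1.erase_succ hX.2)
    · intro X hX
      rw [Finset.mem_filter, mem_orthants]
      exact ⟨(mem_orthants.mp hX).insert_succ, Finset.mem_insert_self _ _⟩
    · exact fun X hX => Finset.insert_erase (Finset.mem_filter.mp hX).2
    · exact fun X hX => Finset.erase_insert (notMem X hX)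
    · exact fun X hX => congrArg g' (Finset.insert_erase (Finset.mem_filter.mp hX).2).symm
  have neg_half : ∑ X ∈ orthants (n + 1) with (n + 1 : ℤ) ∉ X, g X =
      ∑ X ∈ orthants (n + 1) with (n + 1 : ℤ) ∈ X, g (-X) := by
    refine Finset.sum_bij' (fun X _ => -X) (fun X _ => -X) ?_ ?_ (fun X _ => neg_neg X)
      (fun X _ => neg_neg X) (fun X _ => by rw [neg_neg])
    · intro X hX
      rw [Finset.mem_filter, mem_orthants] at hX ⊢
      refine ⟨hX.1.neg, Finset.mem_neg'.mpr ?_⟩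
      exact (hX.1.mem_or_neg_mem (by omega) (by omega)).resolve_left hX.2
    · intro X hX
      rw [Finset.mem_filter, mem_orthants] at hX ⊢
      exact ⟨hX.1.neg, fun h => hX.1.2.2 _ hX.2 (Finset.mem_neg'.mp h)⟩
  rw [← Finset.sum_filter_add_sum_filter_not (orthants (n + 1)) fun X => (n + 1 : ℤ) ∈ X,
    neg_half, sum_half, sum_half, Finset.sum_add_distrib]

/-- The orthants `X` and `insert (-x) (X.erase x)` share the wall `X.erase x`. -/
theorem sum_orthants_sum_erase {R : Type*} [Semiring R] [CharP R 2] (n : ℕ) (g : Finset ℤ → R) :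
    ∑ X ∈ orthants n, ∑ x ∈ X, g (X.erase x) = 0 := by
  rw [Finset.sum_sigma']
  have erase_reflect : ∀ p ∈ (orthants n).sigma id,
      (insert (-p.2) (p.1.erase p.2)).erase (-p.2) = p.1.erase p.2 := by
    rintro ⟨X, x⟩ hp
    obtain ⟨hX, hx⟩ := Finset.mem_sigma.mp hp
    exact Finset.erase_insert fun h =>
      (mem_orthants.mp hX).2.2 x hx (Finset.mem_of_mem_erase h)
  refine Finset.sum_involution (fun p _ => ⟨insert (-p.2) (p.1.erase p.2), -p.2⟩) ?_ ?_ ?_ ?_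
  · intro p hp
    dsimp only
    rw [erase_reflect p hp]
    exact CharTwo.add_self_eq_zero _
  · rintro ⟨X, x⟩ hp - heq
    obtain ⟨hX, hx⟩ := Finset.mem_sigma.mp hp
    have hx0 := ((mem_orthants.mp hX).2.1 x hx).1
    have : -x = x := congrArg Sigma.snd heq
    omega
  · rintro ⟨X, x⟩ hp
    obtain ⟨hX, hx⟩ := Finset.mem_sigma.mp hp
    exact Finset.mem_sigma.mpr
      ⟨mem_orthants.mpr ((mem_orthants.mp hX).insert_neg_erase hx), Finset.mem_insert_self _ _⟩
  · intro p hp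
    dsimp only
    rw [erase_reflect p hp, neg_neg, Finset.insert_erase (Finset.mem_sigma.mp hp).2]

end Orthants

section Tucker

variable {n : ℕ}

theorem sum_orthants_flagParity {𝒯 : Set (Finset ℤ)}
    (h : ∀ X, IsSignedSubset n X → X.Nonempty → (-X ∈ 𝒯 ↔ X ∉ 𝒯)) :
    ∑ X ∈ orthants n, flagParity 𝒯 X = 1 := by
  induction n with
  | zero => rw [orthants_zero, Finset.sum_singleton, flagParity_empty]
  | succ n ih =>
    have ih := ih fun X hX => h X ⟨fun a ha => (hX.1 a ha).imp_right Nat.le_succ_of_le, hX.2⟩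
    have split : ∀ X ∈ orthants n,
        flagParity 𝒯 (insert (n + 1 : ℤ) X) + flagParity 𝒯 (-insert (n + 1 : ℤ) X) =
          flagParity 𝒯 X + ∑ x ∈ X, flagParity 𝒯 (insert (n + 1 : ℤ) (X.erase x)) := by
      intro X hX
      have hX' := (mem_orthants.mp hX).insert_succ
      have hnX : (n + 1 : ℤ) ∉ X := fun hn => by
        have := (mem_orthants.mp hX).2.1 _ hn
        omega
      rw [flagParity_neg (𝒮 := 𝒯ᶜ) fun Y hY => h Y (IsSignedSubset.subset hX'.2 hY),
        flagParity_add_flagParity_compl (Finset.insert_nonempty _ _), Finset.sum_insert hnX,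
        Finset.erase_insert hnX]
      congr 1
      refine Finset.sum_congr rfl fun x hx => ?_
      have hxn : (n + 1 : ℤ) ≠ x := fun h => hnX (h ▸ hx)
      rw [Finset.erase_insert_of_ne hxn]
    rw [sum_orthants_succ, Finset.sum_congr rfl split, Finset.sum_add_distrib, ih,
      sum_orthants_sum_erase n fun X => flagParity 𝒯 (insert (n + 1 : ℤ) X), add_zero]

theorem exists_flagParity_ne_zero {𝒯 : Set (Finset ℤ)}
    (h : ∀ X, IsSignedSubset n X → X.Nonempty → (-X ∈ 𝒯 ↔ X ∉ 𝒯)) :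
    ∃ X, IsSignedKSubset n n X ∧ flagParity 𝒯 X ≠ 0 := by
  obtain ⟨X, hX, hne⟩ := Finset.exists_ne_zero_of_sum_ne_zero
    ((sum_orthants_flagParity h).trans_ne one_ne_zero)
  exact ⟨X, mem_orthants.mp hX, hne⟩

/-- The octahedral Tucker lemma for the labelling of `X` by `± max (f X) (f (-X))`, signed by the
larger of the two values. -/
theorem exists_le_of_monotone_of_ne_neg {f : Finset ℤ → ℕ} (hf : Monotone f)
    (hne : ∀ X, IsSignedSubset n X → X.Nonempty → f X ≠ f (-X)) :
    ∃ X, IsSignedSubset n X ∧ n ≤ f X := by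
  obtain ⟨X, ⟨hcard, hX⟩, hflag⟩ := exists_flagParity_ne_zero (n := n)
    (𝒯 := {X | Odd X.card ↔ f (-X) < f X}) fun X hX hX₀ => by
      have := hne X hX hX₀
      simp only [Set.mem_ofPred_eq, Finset.card_neg, neg_neg]
      grind
  have hle := card_le_max_of_flagParity_ne_zero hf
    (fun Y hYX => hne Y (IsSignedSubset.subset hX hYX)) hflag
  rw [hcard, le_max_iff] at hle
  exact hle.elim (fun h => ⟨X, hX, h⟩) fun h => ⟨-X, IsSignedSubset.neg hX, h⟩

end Tucker

section Alternating

variable {n : ℕ} {A B X : Finset ℤ}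

theorem IsAlternating.empty : IsAlternating ∅ := fun _ h => absurd h (Finset.notMem_empty _)

theorem FirstPos.empty : FirstPos ∅ := fun _ h => absurd h (Finset.notMem_empty _)

theorem IsAlternating.neg (hA : IsAlternating A) (h0 : 0 ∉ A) : IsAlternating (-A) := by
  intro a ha b hb hab hconsec
  rw [Finset.mem_neg'] at ha hb
  have hsign : 0 < -a ↔ -b < 0 := hA (-a) ha (-b) hb (by simpa using hab) fun c hc => by
    simpa using hconsec (-c) (Finset.mem_neg'.mpr (by rwa [neg_neg]))
  have : -a ≠ 0 := fun h => h0 (h ▸ ha)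
  have : -b ≠ 0 := fun h => h0 (h ▸ hb)
  omega

theorem IsAlternating.insert_neg {a : ℤ} (hA : IsAlternating A) (hfirst : FirstPos A)
    (h0 : 0 ∉ A) (ha : 0 < a) (hlt : ∀ b ∈ A, a.natAbs < b.natAbs) :
    IsAlternating (insert a (-A)) := by
  have hlt' : ∀ b ∈ -A, a.natAbs < b.natAbs := fun b hb => by
    simpa using hlt (-b) (Finset.mem_neg'.mp hb)
  intro b hb c hc hbc hconsec
  have hcA : c ∈ -A := by
    refine Finset.mem_of_mem_insert_of_ne hc fun hca => ?_
    rcases Finset.mem_insert.mp hb with rfl | hbA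
    · exact hbc.ne (congrArg Int.natAbs hca.symm)
    · exact (hlt' b hbA).not_gt (hca ▸ hbc)
  rcases Finset.mem_insert.mp hb with rfl | hbA
  · have hc_pos : 0 < -c := hfirst (-c) (Finset.mem_neg'.mp hcA) fun d hd => by
      have := hconsec (-d) (Finset.mem_insert_of_mem (Finset.neg_mem_neg hd))
      have := hlt d hd
      omega
    omega
  · exact hA.neg h0 b hbA c hcA hbc fun d hd => hconsec d (Finset.mem_insert_of_mem hd)

theorem firstPos_insert {a : ℤ} (ha : 0 < a) (hlt : ∀ b ∈ A, a.natAbs < b.natAbs) :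
    FirstPos (insert a A) := by
  intro b hb hmin
  rcases Finset.mem_insert.mp hb with rfl | hbA
  · exact ha
  · exact absurd (hlt b hbA) (hmin a (Finset.mem_insert_self a A)).not_gt

theorem IsSignedSubset.exists_alternating_card_succ (hX : IsSignedSubset n X) {a : ℤ} (haX : a ∈ X)
    (hmin : ∀ b ∈ X, a.natAbs ≤ b.natAbs) (ha : 0 < a) (hBX : B ⊆ -X) (hB : IsAlternating B)
    (hfirst : FirstPos B) :
    ∃ A ⊆ X, IsAlternating A ∧ FirstPos A ∧ A.card = B.card + 1 := by
  have hle : ∀ b ∈ B, a.natAbs ≤ b.natAbs := fun b hb => by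
    simpa using hmin (-b) (Finset.mem_neg'.mp (hBX hb))
  have hneg_notMem : -a ∉ B := fun h => by
    have := hfirst (-a) h fun b hb => by simpa using hle b hb
    omega
  have hlt : ∀ b ∈ B, a.natAbs < b.natAbs := fun b hb => by
    refine (hle b hb).lt_of_ne fun hab => ?_
    have : -b = a := hX.injOn_natAbs (Finset.mem_neg'.mp (hBX hb)) haX (by simpa using hab.symm)
    exact hneg_notMem (by rwa [← this, neg_neg])
  have h0 : 0 ∉ B := fun h => absurd (hlt 0 h) (by simp)
  have hBX' : -B ⊆ X := neg_neg X ▸ Finset.neg_subset_neg hBX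
  refine ⟨insert a (-B), Finset.insert_subset haX hBX',
    hB.insert_neg hfirst h0 ha hlt, firstPos_insert ha fun b hb => ?_, ?_⟩
  · simpa using hlt (-b) (Finset.mem_neg'.mp hb)
  · rw [Finset.card_insert_of_notMem fun h => hneg_notMem (Finset.mem_neg'.mp h), Finset.card_neg]

end Alternating

section AlternatingWeight

variable {n k : ℕ} {c : Finset ℤ → ℕ} {A X : Finset ℤ}

open Classical in
/-- The alternating subsets of `X` of size at most `k` whose first element is positive. -/
noncomputable def posAlternatingSubsets (k : ℕ) (X : Finset ℤ) : Finset (Finset ℤ) :=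
  {A ∈ X.powerset | IsAlternating A ∧ FirstPos A ∧ A.card ≤ k}

theorem mem_posAlternatingSubsets :
    A ∈ posAlternatingSubsets k X ↔ A ⊆ X ∧ IsAlternating A ∧ FirstPos A ∧ A.card ≤ k := by
  classical
  rw [posAlternatingSubsets, Finset.mem_filter, Finset.mem_powerset]

/-- The weight that places all colours of `k`-sets above the sizes of the smaller sets. -/
def colorWeight (k : ℕ) (c : Finset ℤ → ℕ) (A : Finset ℤ) : ℕ :=
  if A.card < k then A.card else k + c A

theorem card_le_colorWeight (h : A.card ≤ k) : A.card ≤ colorWeight k c A := by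
  rw [colorWeight]
  split_ifs <;> omega

/-- The largest weight of a member of `posAlternatingSubsets k X`. -/
noncomputable def maxColorWeight (k : ℕ) (c : Finset ℤ → ℕ) (X : Finset ℤ) : ℕ :=
  (posAlternatingSubsets k X).sup (colorWeight k c)

theorem monotone_maxColorWeight : Monotone (maxColorWeight k c) := by
  refine fun X Y hXY => Finset.sup_mono fun A hA => ?_
  rw [mem_posAlternatingSubsets] at hA ⊢
  exact ⟨hA.1.trans hXY, hA.2⟩

theorem exists_colorWeight_eq_maxColorWeight (k : ℕ) (c : Finset ℤ → ℕ) (X : Finset ℤ) :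
    ∃ A ∈ posAlternatingSubsets k X, colorWeight k c A = maxColorWeight k c X := by
  have hempty : ∅ ∈ posAlternatingSubsets k X := mem_posAlternatingSubsets.mpr
    ⟨X.empty_subset, IsAlternating.empty, FirstPos.empty, k.zero_le⟩
  obtain ⟨A, hA, h⟩ := Finset.exists_mem_eq_sup _ ⟨∅, hempty⟩ (colorWeight k c)
  exact ⟨A, hA, h.symm⟩

theorem maxColorWeight_neg_lt (hX : IsSignedSubset n X) {a : ℤ} (haX : a ∈ X)
    (hmin : ∀ b ∈ X, a.natAbs ≤ b.natAbs) (ha : 0 < a) (hk : maxColorWeight k c (-X) < k) :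
    maxColorWeight k c (-X) < maxColorWeight k c X := by
  obtain ⟨B, hB, hweight⟩ := exists_colorWeight_eq_maxColorWeight k c (-X)
  obtain ⟨hBX, hBalt, hBfirst, -⟩ := mem_posAlternatingSubsets.mp hB
  have hcardB : B.card = maxColorWeight k c (-X) := by
    rw [colorWeight] at hweight
    split_ifs at hweight <;> omega
  obtain ⟨A, hAX, hAalt, hAfirst, hcardA⟩ :=
    hX.exists_alternating_card_succ haX hmin ha hBX hBalt hBfirst
  have hAk : A.card ≤ k := by omega
  calc maxColorWeight k c (-X) < A.card := by omega
    _ ≤ colorWeight k c A := card_le_colorWeight hAk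
    _ ≤ maxColorWeight k c X :=
      Finset.le_sup (mem_posAlternatingSubsets.mpr ⟨hAX, hAalt, hAfirst, hAk⟩)

theorem maxColorWeight_ne_neg_of_lt (hX : IsSignedSubset n X) (hX₀ : X.Nonempty)
    (hk : maxColorWeight k c X < k) : maxColorWeight k c X ≠ maxColorWeight k c (-X) := by
  intro heq
  obtain ⟨a, haX, hmin⟩ := X.exists_min_image Int.natAbs hX₀
  rcases lt_or_gt_of_ne (hX.1 a haX).1 with ha | ha
  · have hlt := maxColorWeight_neg_lt (a := -a) (k := k) (c := c) hX.neg (Finset.neg_mem_neg haX)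
      (fun b hb => by simpa using hmin (-b) (Finset.mem_neg'.mp hb)) (by omega)
    rw [neg_neg] at hlt
    exact (hlt hk).ne heq
  · exact (maxColorWeight_neg_lt hX haX hmin ha (heq ▸ hk)).ne' heq

end AlternatingWeight

section Coloring

variable {n k m : ℕ} {c : Finset ℤ → ℕ} {X : Finset ℤ}

theorem exists_vertex_of_le_maxColorWeight (hX : IsSignedSubset n X)
    (hk : k ≤ maxColorWeight k c X) :
    ∃ A : HSSVertex n k, A.1 ⊆ X ∧ k + c A.1 = maxColorWeight k c X := by
  obtain ⟨A, hA, hweight⟩ := exists_colorWeight_eq_maxColorWeight k c X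
  obtain ⟨hAX, hAalt, hAfirst, hAk⟩ := mem_posAlternatingSubsets.mp hA
  rw [colorWeight] at hweight
  split_ifs at hweight with hcard
  · omega
  exact ⟨⟨A, ⟨hAk.antisymm (not_lt.mp hcard), hX.subset hAX⟩, hAalt, hAfirst⟩, hAX, hweight⟩

theorem maxColorWeight_ne_neg (hc : ∀ A B : HSSVertex n k, Disjoint A.1 B.1 → c A.1 ≠ c B.1)
    (hX : IsSignedSubset n X) (hX₀ : X.Nonempty) :
    maxColorWeight k c X ≠ maxColorWeight k c (-X) := by
  rcases lt_or_ge (maxColorWeight k c X) k with hlt | hge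
  · exact maxColorWeight_ne_neg_of_lt hX hX₀ hlt
  intro heq
  obtain ⟨A, hAX, hA⟩ := exists_vertex_of_le_maxColorWeight hX hge
  obtain ⟨B, hBX, hB⟩ := exists_vertex_of_le_maxColorWeight hX.neg (heq ▸ hge)
  exact hc A B (hX.disjoint_neg.mono hAX hBX) (by omega)

theorem exists_vertex_le_add_color (hkn : k ≤ n)
    (hc : ∀ A B : HSSVertex n k, Disjoint A.1 B.1 → c A.1 ≠ c B.1) :
    ∃ A : HSSVertex n k, n ≤ k + c A.1 := by
  obtain ⟨X, hX, hnX⟩ := exists_le_of_monotone_of_ne_neg monotone_maxColorWeight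
    fun X hX hX₀ => maxColorWeight_ne_neg hc hX hX₀
  obtain ⟨A, -, hA⟩ := exists_vertex_of_le_maxColorWeight hX (hkn.trans hnX)
  exact ⟨A, hnX.trans_eq hA.symm⟩

theorem isColorable_hssVertex_of_hksVertex
    (h : IsColorable (fun A B : HKSVertex n k => A ≠ B ∧ Disjoint A.1 B.1) m) :
    IsColorable (fun A B : HSSVertex n k => A ≠ B ∧ Disjoint A.1 B.1) m :=
  h.comap (fun A => ⟨A.1, A.2.1, A.2.2.2⟩) fun _ _ hAB =>
    hAB.imp_left fun hne heq => hne (Subtype.ext (Subtype.mk.inj heq))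

theorem le_of_isColorable_hssVertex (hk : 1 ≤ k) (hkn : k ≤ n)
    (h : IsColorable (fun A B : HSSVertex n k => A ≠ B ∧ Disjoint A.1 B.1) m) :
    n - k + 1 ≤ m := by
  obtain ⟨c, hc⟩ := h
  let c' : Finset ℤ → ℕ := Function.extend Subtype.val (fun A : HSSVertex n k => (c A : ℕ)) 0
  have hc' (A : HSSVertex n k) : c' A.1 = c A := Subtype.val_injective.extend_apply _ _ A
  obtain ⟨A, hA⟩ := exists_vertex_le_add_color (c := c') hkn fun A B hAB => by
    have hA : A.1.Nonempty := Finset.card_pos.mp (A.2.1.1.symm ▸ hk)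
    rw [hc', hc', ne_eq, Fin.val_inj]
    exact hc A B ⟨fun heq => hAB.ne hA.ne_empty (congrArg Subtype.val heq), hAB⟩
  have := hc' A ▸ (c A).isLt
  omega

theorem HKSVertex.exists_succ_mem (hk : 1 ≤ k) (A : HKSVertex n k) :
    ∃ i : Fin (n - k + 1), (i + 1 : ℤ) ∈ A.1 := by
  obtain ⟨A, ⟨hcard, hA⟩, hfirst⟩ := A
  obtain ⟨a, ha, hmin⟩ := A.exists_min_image Int.natAbs (Finset.card_pos.mp (hcard ▸ hk))
  have hpos : 0 < a := hfirst a ha hmin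
  have hle : A.card ≤ (Finset.Icc a.natAbs n).card :=
    Finset.card_le_card_of_injOn Int.natAbs
      (fun b hb => Finset.mem_coe.mpr (Finset.mem_Icc.mpr ⟨hmin b hb, (hA.1 b hb).2⟩))
      (IsSignedSubset.injOn_natAbs hA)
  rw [hcard, Nat.card_Icc] at hle
  refine ⟨⟨a.natAbs - 1, by omega⟩, ?_⟩
  convert ha using 1
  dsimp only
  omega

theorem isColorable_hksVertex (hk : 1 ≤ k) :
    IsColorable (fun A B : HKSVertex n k => A ≠ B ∧ Disjoint A.1 B.1) (n - k + 1) := by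
  choose c hc using HKSVertex.exists_succ_mem (n := n) hk
  exact ⟨c, fun A B hAB heq => Finset.disjoint_left.mp hAB.2 (hc A) (heq ▸ hc B)⟩

end Coloring

/-- for all `n ≥ k ≥ 1`,
`χ(ŜK(n,k)⁻) = χ(ŜS(n,k)⁻) = n−k+1`, where `G⁻` is the graph on the same vertices whose
edges are the negative edges (pairs of disjoint sets). -/
theorem half_negative_subgraphs_chromatic (n k : ℕ) (hk : 1 ≤ k) (hkn : k ≤ n) :
    chromNum (fun A B : HKSVertex n k => A ≠ B ∧ Disjoint A.1 B.1) = n - k + 1 ∧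
    chromNum (fun A B : HSSVertex n k => A ≠ B ∧ Disjoint A.1 B.1) = n - k + 1 := by
  have hcol := isColorable_hksVertex (n := n) hk
  exact ⟨chromNum_eq_of_isLeast ⟨hcol, fun m h =>
      le_of_isColorable_hssVertex hk hkn (isColorable_hssVertex_of_hksVertex h)⟩,
    chromNum_eq_of_isLeast ⟨isColorable_hssVertex_of_hksVertex hcol, fun m h =>
      le_of_isColorable_hssVertex hk hkn h⟩⟩
end
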